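/- Let k > n be positive integers and let Ω ⊆ ℝ^k be open. Let f : Ω → ℝ^{2n+1} be locally integrable with a locally integrable weak derivative Df : Ω → L(ℝ^k, ℝ^{2n+1}) (i.e. for every smooth compactly supported φ : Ω → ℝ and every i ∈ {1,…,k}, ∫_Ω f(x) ∂φ/∂x_i(x) dx = −∫_Ω Df(x)(e_i) φ(x) dx), satisfying the weak contact equation: for Lebesgue-almost every x ∈ Ω the image of Df(x) is contained in ker α(f(x)). Assume in addition the Lusin condition: for every Z ⊆ Ω of Lebesgue measure zero, the set f(Z) has k-dimensional Hausdorff measure zero with respect to d_K. Then f(Ω) has k-dimensional Hausdorff measure zero with respect to d_K. -/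

import Mathlib

open MeasureTheory Metric Set
open scoped ENNReal NNReal

noncomputable section

abbrev Heis (n : ℕ) := EuclideanSpace ℝ (Fin (2*n+1))
abbrev Horiz (n : ℕ) := EuclideanSpace ℝ (Fin (2*n))

def xIdx (n : ℕ) (j : Fin n) : Fin (2*n+1) := ⟨2*j.1, by have := j.2; omega⟩
def yIdx (n : ℕ) (j : Fin n) : Fin (2*n+1) := ⟨2*j.1+1, by have := j.2; omega⟩
def tIdx (n : ℕ) : Fin (2*n+1) := ⟨2*n, by omega⟩
def xIdx2 (n : ℕ) (j : Fin n) : Fin (2*n) := ⟨2*j.1, by have := j.2; omega⟩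
def yIdx2 (n : ℕ) (j : Fin n) : Fin (2*n) := ⟨2*j.1+1, by have := j.2; omega⟩

/-- The Korányi distance on the Heisenberg group `ℍ^n = ℝ^{2n+1}`. -/
def dK (n : ℕ) (p q : Heis n) : ℝ :=
  ((∑ j : Fin n, ((p (xIdx n j) - q (xIdx n j))^2 + (p (yIdx n j) - q (yIdx n j))^2))^2
    + (p (tIdx n) - q (tIdx n)
        + 2 * ∑ j : Fin n, (q (xIdx n j) * p (yIdx n j) - p (xIdx n j) * q (yIdx n j)))^2)
    ^ ((1:ℝ)/4)

/-- The kernel of the standard contact form `α = dt + 2∑ (x_j dy_j − y_j dx_j)` at `p`. -/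
def kerAlpha (n : ℕ) (p : Heis n) : Set (Heis n) :=
  {v | v (tIdx n)
    + 2 * ∑ j : Fin n, (p (xIdx n j) * v (yIdx n j) - p (yIdx n j) * v (xIdx n j)) = 0}

/-- The standard symplectic form on `ℝ^{2n}`. -/
def omegaF (n : ℕ) (v w : Horiz n) : ℝ :=
  ∑ j : Fin n, (v (xIdx2 n j) * w (yIdx2 n j) - v (yIdx2 n j) * w (xIdx2 n j))

/-- The projection `π : ℝ^{2n+1} → ℝ^{2n}` forgetting the `t`-coordinate. -/
def piH (n : ℕ) (p : Heis n) : Horiz n :=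
  (EuclideanSpace.equiv (Fin (2*n)) ℝ).symm (fun i => p ⟨i.1, by have := i.2; omega⟩)

/-- Diameter of a set with respect to the Korányi distance, as an extended real. -/
def kDiam (n : ℕ) (U : Set (Heis n)) : ℝ≥0∞ :=
  ⨆ p ∈ U, ⨆ q ∈ U, ENNReal.ofReal (dK n p q)

/-- `S` is null for the `k`-dimensional Hausdorff measure built from the Korányi
distance: its `k`-dimensional Hausdorff content is arbitrarily small. -/
def IsHausdorffNullK (n k : ℕ) (S : Set (Heis n)) : Prop :=
  ∀ ε : ℝ≥0∞, 0 < ε → ∃ U : ℕ → Set (Heis n),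
    (S ⊆ ⋃ i, U i) ∧ ∑' i, (kDiam n (U i)) ^ k < ε

/-- `f` is Lipschitz on `E` as a map into `(ℝ^{2n+1}, d_K)`. -/
def LipschitzOnK (n : ℕ) {k : ℕ} (f : EuclideanSpace ℝ (Fin k) → Heis n)
    (E : Set (EuclideanSpace ℝ (Fin k))) : Prop :=
  ∃ L : ℝ, 0 ≤ L ∧ ∀ x ∈ E, ∀ y ∈ E, dK n (f x) (f y) ≤ L * dist x y

end
/-- `Df` is the weak (distributional) derivative of `f` on `Ω`: integration by parts
against smooth compactly supported test functions holds in every coordinate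
direction. -/
def IsWeakFDerivOn {k m : ℕ} (Ω : Set (EuclideanSpace ℝ (Fin k)))
    (f : EuclideanSpace ℝ (Fin k) → EuclideanSpace ℝ (Fin m))
    (Df : EuclideanSpace ℝ (Fin k) → (EuclideanSpace ℝ (Fin k) →L[ℝ] EuclideanSpace ℝ (Fin m))) :
    Prop :=
  ∀ φ : EuclideanSpace ℝ (Fin k) → ℝ, ContDiff ℝ (⊤ : ℕ∞) φ → HasCompactSupport φ →
    tsupport φ ⊆ Ω → ∀ i : Fin k,
      ∫ x in Ω, fderiv ℝ φ x (EuclideanSpace.single i (1:ℝ)) • f x =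
        - ∫ x in Ω, φ x • Df x (EuclideanSpace.single i (1:ℝ))

open Filter Topology

noncomputable section

/-- The map `J` of `ℝ^{2n+1}` with `⟪J v, w⟫` the standard symplectic form of the horizontal
parts of `v` and `w`. -/
def sympJ (n : ℕ) : Heis n →L[ℝ] Heis n :=
  LinearMap.toContinuousLinearMap
    (∑ j : Fin n,
      ((EuclideanSpace.proj (𝕜 := ℝ) (xIdx n j)).toLinearMap.smulRight
          (EuclideanSpace.single (yIdx n j) (1 : ℝ)) -
        (EuclideanSpace.proj (𝕜 := ℝ) (yIdx n j)).toLinearMap.smulRight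
          (EuclideanSpace.single (xIdx n j) (1 : ℝ))) : Heis n →ₗ[ℝ] Heis n)

lemma inner_sympJ (n : ℕ) (v w : Heis n) :
    inner ℝ (sympJ n v) w =
      ∑ j : Fin n, (v (xIdx n j) * w (yIdx n j) - v (yIdx n j) * w (xIdx n j)) := by
  simp [sympJ, sum_inner, inner_sub_left, inner_smul_left, EuclideanSpace.inner_single_left]

lemma inner_sympJ_comm (n : ℕ) (v w : Heis n) :
    inner ℝ (sympJ n v) w = - inner ℝ (sympJ n w) v := by
  rw [inner_sympJ, inner_sympJ, ← Finset.sum_neg_distrib]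
  exact Finset.sum_congr rfl fun j _ => by ring

lemma inner_sympJ_self (n : ℕ) (v : Heis n) : inner ℝ (sympJ n v) v = (0 : ℝ) := by
  have := inner_sympJ_comm n v v
  linarith

lemma abs_inner_sympJ_le (n : ℕ) (v w : Heis n) :
    |inner ℝ (sympJ n v) w| ≤ ‖sympJ n‖ * ‖v‖ * ‖w‖ :=
  (abs_real_inner_le_norm _ _).trans
    (mul_le_mul_of_nonneg_right ((sympJ n).le_opNorm v) (norm_nonneg w))

lemma mem_kerAlpha_iff (n : ℕ) (p v : Heis n) :
    v ∈ kerAlpha n p ↔ v (tIdx n) + 2 * inner ℝ (sympJ n p) v = 0 := by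
  rw [inner_sympJ]; rfl

/-- The vertical coordinate of the group element `q⁻¹ p`. -/
def height (n : ℕ) (p q : Heis n) : ℝ :=
  p (tIdx n) - q (tIdx n) + 2 * inner ℝ (sympJ n q) p

lemma height_comm (n : ℕ) (p q : Heis n) : height n p q = - height n q p := by
  have := inner_sympJ_comm n p q
  simp only [height]; linarith

lemma height_triangle (n : ℕ) (y w z : Heis n) :
    height n y w + height n w z + height n z y = 2 * inner ℝ (sympJ n (w - z)) (y - z) := by
  have h1 := inner_sympJ_comm n w z
  have h2 := inner_sympJ_comm n z y
  have h3 := inner_sympJ_self n z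
  simp only [height, map_sub, inner_sub_left, inner_sub_right]
  linarith

lemma horizontal_sq_sum_le (n : ℕ) (p : Heis n) :
    ∑ j : Fin n, ((p (xIdx n j)) ^ 2 + (p (yIdx n j)) ^ 2) ≤ ‖p‖ ^ 2 := by
  rw [EuclideanSpace.norm_sq_eq, Finset.sum_add_distrib]
  have hx : Function.Injective (xIdx n) := fun a b h => by
    simp only [xIdx, Fin.mk.injEq] at h; exact Fin.ext (by omega)
  have hy : Function.Injective (yIdx n) := fun a b h => by
    simp only [yIdx, Fin.mk.injEq] at h; exact Fin.ext (by omega)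
  have hd : Disjoint (Finset.univ.image (xIdx n)) (Finset.univ.image (yIdx n)) := by
    rw [Finset.disjoint_left]
    intro a ha hb
    simp only [Finset.mem_image, Finset.mem_univ, true_and] at ha hb
    obtain ⟨i, rfl⟩ := ha
    obtain ⟨j, hj⟩ := hb
    simp only [xIdx, yIdx, Fin.mk.injEq] at hj; omega
  rw [← Finset.sum_image (f := fun i => p i ^ 2) (fun a _ b _ h => hx h),
    ← Finset.sum_image (f := fun i => p i ^ 2) (fun a _ b _ h => hy h),
    ← Finset.sum_union hd]
  simp only [Real.norm_eq_abs, sq_abs]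
  exact Finset.sum_le_sum_of_subset_of_nonneg (Finset.subset_univ _) fun _ _ _ => sq_nonneg _

lemma dK_le_of_norm_sub_le (n : ℕ) {p q : Heis n} {ρ : ℝ} (hρ : 0 ≤ ρ) (h1 : ‖p - q‖ ≤ ρ)
    (h2 : |height n p q| ≤ ρ ^ 2) : dK n p q ≤ 2 * ρ := by
  have hh : height n p q = p (tIdx n) - q (tIdx n) + 2 * ∑ j : Fin n,
      (q (xIdx n j) * p (yIdx n j) - p (xIdx n j) * q (yIdx n j)) := by
    rw [height, inner_sympJ]
    congr 2
    exact Finset.sum_congr rfl fun j _ => by ring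
  rw [dK, ← hh]
  have h3 := horizontal_sq_sum_le n (p - q)
  simp only [PiLp.sub_apply] at h3
  set S := ∑ j : Fin n, ((p (xIdx n j) - q (xIdx n j)) ^ 2 + (p (yIdx n j) - q (yIdx n j)) ^ 2)
  have hS0 : 0 ≤ S := Finset.sum_nonneg fun j _ => by positivity
  have hS : S ≤ ρ ^ 2 := h3.trans (pow_le_pow_left₀ (norm_nonneg _) h1 2)
  have h4 : S ^ 2 ≤ (ρ ^ 2) ^ 2 := pow_le_pow_left₀ hS0 hS 2
  have h5 : height n p q ^ 2 ≤ (ρ ^ 2) ^ 2 := by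
    rw [← sq_abs]; exact pow_le_pow_left₀ (abs_nonneg _) h2 2
  have h6 : S ^ 2 + height n p q ^ 2 ≤ (2 * ρ) ^ (4 : ℕ) := by nlinarith [sq_nonneg (ρ ^ 2)]
  calc (S ^ 2 + height n p q ^ 2) ^ ((1 : ℝ) / 4)
      ≤ ((2 * ρ) ^ (4 : ℕ)) ^ ((1 : ℝ) / 4) :=
        Real.rpow_le_rpow (by positivity) h6 (by norm_num)
    _ = 2 * ρ := by
        have := Real.pow_rpow_inv_natCast (x := 2 * ρ) (n := 4) (by positivity) (by norm_num)
        simpa [one_div] using this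

lemma eq_zero_of_sympJ_eq_zero (n : ℕ) {v : Heis n} (hJ : sympJ n v = 0) (ht : v (tIdx n) = 0) :
    v = 0 := by
  have hJ' : ∀ w : Heis n,
      ∑ j : Fin n, (v (xIdx n j) * w (yIdx n j) - v (yIdx n j) * w (xIdx n j)) = 0 := by
    intro w; rw [← inner_sympJ, hJ, inner_zero_left]
  ext i
  obtain ⟨m, hm⟩ := Nat.even_or_odd' i.1
  rcases hm with hm | hm
  · by_cases hmn : m < n
    · have h := hJ' (EuclideanSpace.single (yIdx n ⟨m, hmn⟩) (1 : ℝ))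
      rw [Finset.sum_eq_single ⟨m, hmn⟩] at h
      · have hi : i = xIdx n ⟨m, hmn⟩ := Fin.ext hm
        have hne : xIdx n ⟨m, hmn⟩ ≠ yIdx n ⟨m, hmn⟩ := by simp [xIdx, yIdx]
        simpa [hne, hi] using h
      · intro b _ hb
        have h1 : yIdx n b ≠ yIdx n ⟨m, hmn⟩ := fun h => hb <| by
          simp only [yIdx, Fin.mk.injEq] at h; exact Fin.ext (by simp; omega)
        have h2 : xIdx n b ≠ yIdx n ⟨m, hmn⟩ := fun h => by
          simp only [xIdx, yIdx, Fin.mk.injEq] at h; omega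
        simp [h1, h2]
      · simp
    · have hi : i = tIdx n := Fin.ext (by simp only [tIdx]; omega)
      simpa [hi] using ht
  · have hmn : m < n := by omega
    have h := hJ' (EuclideanSpace.single (xIdx n ⟨m, hmn⟩) (1 : ℝ))
    rw [Finset.sum_eq_single ⟨m, hmn⟩] at h
    · have hi : i = yIdx n ⟨m, hmn⟩ := Fin.ext hm
      have hne : yIdx n ⟨m, hmn⟩ ≠ xIdx n ⟨m, hmn⟩ := by simp [xIdx, yIdx]
      simpa [hne, hi] using h
    · intro b _ hb
      have h1 : xIdx n b ≠ xIdx n ⟨m, hmn⟩ := fun h => hb <| by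
        simp only [xIdx, Fin.mk.injEq] at h; exact Fin.ext (by simp; omega)
      have h2 : yIdx n b ≠ xIdx n ⟨m, hmn⟩ := fun h => by
        simp only [xIdx, yIdx, Fin.mk.injEq] at h; omega
      simp [h1, h2]
    · simp

/-- A linear map `ℝ^k → ℝ^{2n+1}`, `k > n`, whose image is isotropic and contained in a contact
hyperplane has a nontrivial kernel. -/
lemma exists_ne_zero_map_eq_zero {n k : ℕ} (hk : n < k)
    (A : EuclideanSpace ℝ (Fin k) →L[ℝ] Heis n) (p : Heis n) (hA : ∀ v, A v ∈ kerAlpha n p)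
    (hiso : ∀ u v, inner ℝ (sympJ n (A u)) (A v) = (0 : ℝ)) : ∃ u, u ≠ 0 ∧ A u = 0 := by
  by_contra! hcon
  have hinj : Function.Injective A.toLinearMap := by
    rw [← LinearMap.ker_eq_bot, LinearMap.ker_eq_bot']
    intro u hu
    by_contra h
    exact hcon u h hu
  have hinj2 : Function.Injective ((sympJ n).toLinearMap ∘ₗ A.toLinearMap) := by
    rw [← LinearMap.ker_eq_bot, LinearMap.ker_eq_bot']
    intro u hu
    by_contra h
    refine hcon u h ?_
    have hJ : sympJ n (A u) = 0 := hu
    have ht : A u (tIdx n) = 0 := by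
      have h1 := (mem_kerAlpha_iff n p _).1 (hA u)
      rw [inner_sympJ_comm, hJ, inner_zero_left] at h1
      linarith
    exact eq_zero_of_sympJ_eq_zero n hJ ht
  have h1 := LinearMap.finrank_range_of_inj hinj
  have h2 := LinearMap.finrank_range_of_inj hinj2
  have h3 : LinearMap.range ((sympJ n).toLinearMap ∘ₗ A.toLinearMap) ≤
      (LinearMap.range A.toLinearMap)ᗮ := by
    rintro _ ⟨u, rfl⟩
    rw [Submodule.mem_orthogonal']
    rintro _ ⟨v, rfl⟩
    exact hiso u v
  have h4 := Submodule.finrank_mono h3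
  have h5 := Submodule.finrank_add_finrank_orthogonal (LinearMap.range A.toLinearMap)
  rw [finrank_euclideanSpace_fin] at h1 h2 h5
  omega

end

/-- Along the segment from `a` to `a + v` the map `F` is the primitive of `G` applied to `v`, and
this primitive is a horizontal curve. -/
structure GoodSegment {n k : ℕ} (F : EuclideanSpace ℝ (Fin k) → Heis n)
    (G : EuclideanSpace ℝ (Fin k) → EuclideanSpace ℝ (Fin k) →L[ℝ] Heis n)
    (a v : EuclideanSpace ℝ (Fin k)) : Prop where
  intervalIntegrable : IntervalIntegrable (fun s : ℝ => G (a + s • v)) volume 0 1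
  endpoint : F (a + v) = F a + ∫ s in (0 : ℝ)..1, G (a + s • v) v
  primitive : ∀ᵐ s : ℝ, s ∈ Ioc (0 : ℝ) 1 →
    F (a + s • v) = F a + ∫ σ in (0 : ℝ)..s, G (a + σ • v) v
  contact : ∀ᵐ s : ℝ, s ∈ Ioc (0 : ℝ) 1 → G (a + s • v) v ∈ kerAlpha n (F (a + s • v))

namespace GoodSegment

variable {n k : ℕ} {F : EuclideanSpace ℝ (Fin k) → Heis n}
  {G : EuclideanSpace ℝ (Fin k) → EuclideanSpace ℝ (Fin k) →L[ℝ] Heis n}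
  {a v : EuclideanSpace ℝ (Fin k)}

lemma intervalIntegrable_apply (h : GoodSegment F G a v) :
    IntervalIntegrable (fun s : ℝ => G (a + s • v) v) volume 0 1 :=
  ⟨h.intervalIntegrable.1.apply_continuousLinearMap v,
    h.intervalIntegrable.2.apply_continuousLinearMap v⟩

lemma norm_primitive_sub_le (h : GoodSegment F G a v)
    (A : EuclideanSpace ℝ (Fin k) →L[ℝ] Heis n) {r : ℝ}
    (hr : ∫ s in (0 : ℝ)..1, ‖G (a + s • v) - A‖ ≤ r) {s : ℝ} (hs : s ∈ Ioc (0 : ℝ) 1) :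
    ‖(∫ σ in (0 : ℝ)..s, G (a + σ • v) v) - s • A v‖ ≤ r * ‖v‖ := by
  have hsub : uIcc (0 : ℝ) s ⊆ uIcc 0 1 := by
    rw [uIcc_of_le hs.1.le, uIcc_of_le zero_le_one]; exact Icc_subset_Icc_right hs.2
  have hi := h.intervalIntegrable_apply.mono_set hsub
  have hd : IntervalIntegrable (fun s : ℝ => ‖G (a + s • v) - A‖) volume 0 1 :=
    (h.intervalIntegrable.sub intervalIntegrable_const).norm
  have h1 : (∫ σ in (0 : ℝ)..s, G (a + σ • v) v) - s • A v =
      ∫ σ in (0 : ℝ)..s, (G (a + σ • v) v - A v) := by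
    rw [intervalIntegral.integral_sub hi intervalIntegrable_const]
    simp
  rw [h1]
  calc ‖∫ σ in (0 : ℝ)..s, (G (a + σ • v) v - A v)‖
      ≤ ∫ σ in (0 : ℝ)..s, ‖G (a + σ • v) - A‖ * ‖v‖ := by
        refine intervalIntegral.norm_integral_le_of_norm_le hs.1.le ?_
          ((hd.mono_set hsub).mul_const _)
        exact ae_of_all _ fun σ _ => (G (a + σ • v) - A).le_opNorm v
    _ = (∫ σ in (0 : ℝ)..s, ‖G (a + σ • v) - A‖) * ‖v‖ :=
        intervalIntegral.integral_mul_const _ _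
    _ ≤ r * ‖v‖ := by
        refine mul_le_mul_of_nonneg_right (le_trans ?_ hr) (norm_nonneg _)
        refine intervalIntegral.integral_mono_interval le_rfl hs.1.le hs.2 ?_ hd
        exact ae_of_all _ fun σ => norm_nonneg _

lemma norm_sub_le (h : GoodSegment F G a v)
    (A : EuclideanSpace ℝ (Fin k) →L[ℝ] Heis n) {r : ℝ}
    (hr : ∫ s in (0 : ℝ)..1, ‖G (a + s • v) - A‖ ≤ r) :
    ‖F (a + v) - F a - A v‖ ≤ r * ‖v‖ := by
  have := h.norm_primitive_sub_le A hr (s := 1) (by simp)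
  rw [one_smul] at this
  rwa [h.endpoint, add_sub_cancel_left]

lemma abs_height_le (h : GoodSegment F G a v)
    (A : EuclideanSpace ℝ (Fin k) →L[ℝ] Heis n) {r L : ℝ} (hA : ‖A‖ ≤ L)
    (hr : ∫ s in (0 : ℝ)..1, ‖G (a + s • v) - A‖ ≤ r) :
    |height n (F (a + v)) (F a)| ≤ 2 * ‖sympJ n‖ * (2 * L * r + r ^ 2) * ‖v‖ ^ 2 := by
  set d : ℝ → ℝ := fun s => ‖G (a + s • v) - A‖ with hddef
  have hd : IntervalIntegrable d volume 0 1 :=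
    (h.intervalIntegrable.sub intervalIntegrable_const).norm
  have hr0 : 0 ≤ r :=
    (intervalIntegral.integral_nonneg zero_le_one fun s _ => norm_nonneg _).trans hr
  have hL : 0 ≤ L := (norm_nonneg A).trans hA
  let T : Heis n →L[ℝ] ℝ :=
    EuclideanSpace.proj (𝕜 := ℝ) (tIdx n) + (2 : ℝ) • innerSL ℝ (sympJ n (F a))
  have hT : ∀ w, T w = w (tIdx n) + 2 * inner ℝ (sympJ n (F a)) w := fun w => by
    simp [T]
  have h1 : height n (F (a + v)) (F a) = ∫ s in (0 : ℝ)..1, T (G (a + s • v) v) := by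
    rw [T.intervalIntegral_comp_comm h.intervalIntegrable_apply]
    have h2 : (∫ s in (0 : ℝ)..1, G (a + s • v) v) = F (a + v) - F a := by
      rw [h.endpoint, add_sub_cancel_left]
    rw [h2, hT, height, inner_sub_right, inner_sympJ_self]
    simp
  have hAv : ‖A v‖ ≤ L * ‖v‖ := A.le_of_opNorm_le hA v
  set c := ‖sympJ n‖ with hc
  have hc0 : 0 ≤ c := norm_nonneg _
  have h3 : ∀ᵐ s : ℝ, s ∈ Ioc (0 : ℝ) 1 →
      ‖T (G (a + s • v) v)‖ ≤ 2 * c * ‖v‖ ^ 2 * (L * r + (L + r) * d s) := by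
    filter_upwards [h.primitive, h.contact] with s hs1 hs2 hs
    specialize hs1 hs
    have hs2 := (mem_kerAlpha_iff n _ _).1 (hs2 hs)
    have hE := h.norm_primitive_sub_le A hr hs
    set e := (∫ σ in (0 : ℝ)..s, G (a + σ • v) v) - s • A v with he
    have hFs : F (a + s • v) = F a + (s • A v + e) := by rw [hs1, he]; abel
    set ρ := G (a + s • v) v - A v with hρ
    have hg : G (a + s • v) v = A v + ρ := by rw [hρ]; abel
    have hρn : ‖ρ‖ ≤ d s * ‖v‖ := (G (a + s • v) - A).le_opNorm v
    have hTe : T (G (a + s • v) v) =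
        -2 * (s * inner ℝ (sympJ n (A v)) ρ + inner ℝ (sympJ n e) (A v)
          + inner ℝ (sympJ n e) ρ) := by
      rw [hT]
      rw [hFs, map_add, inner_add_left] at hs2
      have : inner ℝ (sympJ n (s • A v + e)) (G (a + s • v) v) =
          s * inner ℝ (sympJ n (A v)) ρ + inner ℝ (sympJ n e) (A v)
          + inner ℝ (sympJ n e) ρ := by
        rw [hg, map_add, map_smul]
        simp only [inner_add_left, inner_add_right, real_inner_smul_left, inner_sympJ_self]
        ring
      rw [← this]
      linarith
    have b1 := abs_inner_sympJ_le n (A v) ρ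
    have b2 := abs_inner_sympJ_le n e (A v)
    have b3 := abs_inner_sympJ_le n e ρ
    have b1' : |s * inner ℝ (sympJ n (A v)) ρ| ≤ c * (L * ‖v‖) * (d s * ‖v‖) := by
      rw [abs_mul, abs_of_pos hs.1]
      calc s * |inner ℝ (sympJ n (A v)) ρ| ≤ 1 * (c * ‖A v‖ * ‖ρ‖) := by
            gcongr; exact hs.2
        _ ≤ _ := by rw [one_mul]; gcongr
    have b2' : |inner ℝ (sympJ n e) (A v)| ≤ c * (r * ‖v‖) * (L * ‖v‖) :=
      b2.trans (by gcongr)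
    have b3' : |inner ℝ (sympJ n e) ρ| ≤ c * (r * ‖v‖) * (d s * ‖v‖) :=
      b3.trans (by gcongr)
    rw [hTe, Real.norm_eq_abs, abs_mul, abs_neg, abs_two]
    have := (abs_add_three (s * inner ℝ (sympJ n (A v)) ρ) (inner ℝ (sympJ n e) (A v))
      (inner ℝ (sympJ n e) ρ)).trans (add_le_add (add_le_add b1' b2') b3')
    linarith
  rw [h1, ← Real.norm_eq_abs]
  calc ‖∫ s in (0 : ℝ)..1, T (G (a + s • v) v)‖
      ≤ ∫ s in (0 : ℝ)..1, 2 * c * ‖v‖ ^ 2 * (L * r + (L + r) * d s) :=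
        intervalIntegral.norm_integral_le_of_norm_le zero_le_one h3
          ((intervalIntegrable_const.add (hd.const_mul _)).const_mul _)
    _ = 2 * c * ‖v‖ ^ 2 * (L * r + (L + r) * ∫ s in (0 : ℝ)..1, d s) := by
        rw [intervalIntegral.integral_const_mul, intervalIntegral.integral_add
          intervalIntegrable_const (hd.const_mul _), intervalIntegral.integral_const_mul]
        simp
    _ ≤ 2 * c * ‖v‖ ^ 2 * (L * r + (L + r) * r) := by gcongr
    _ = _ := by ring

end GoodSegment

section WeakDerivative

variable {k m : ℕ} {F : EuclideanSpace ℝ (Fin k) → EuclideanSpace ℝ (Fin m)}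
  {G : EuclideanSpace ℝ (Fin k) → EuclideanSpace ℝ (Fin k) →L[ℝ] EuclideanSpace ℝ (Fin m)}

lemma integrable_bounded_smul {α V : Type*} [MeasurableSpace α] {μ : Measure α}
    [NormedAddCommGroup V] [NormedSpace ℝ V] {φ : α → ℝ} {F : α → V}
    (hφ : AEStronglyMeasurable φ μ) {C : ℝ} (hC : ∀ x, ‖φ x‖ ≤ C) (hF : Integrable F μ) :
    Integrable (fun x => φ x • F x) μ :=
  hF.bdd_smul _ hφ (ae_of_all _ hC)

/-- Integration by parts in an arbitrary direction. -/
lemma integral_fderiv_apply_smul (hFi : Integrable F) (hGi : Integrable G)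
    {U : Set (EuclideanSpace ℝ (Fin k))}
    (hweak : ∀ φ : EuclideanSpace ℝ (Fin k) → ℝ, ContDiff ℝ (⊤ : ℕ∞) φ → HasCompactSupport φ →
      tsupport φ ⊆ U → ∀ i : Fin k, ∫ x, fderiv ℝ φ x (EuclideanSpace.single i (1 : ℝ)) • F x =
        - ∫ x, φ x • G x (EuclideanSpace.single i (1 : ℝ)))
    {φ : EuclideanSpace ℝ (Fin k) → ℝ} (hφ : ContDiff ℝ (⊤ : ℕ∞) φ) (hφc : HasCompactSupport φ)
    (hφU : tsupport φ ⊆ U) (v : EuclideanSpace ℝ (Fin k)) :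
    ∫ x, fderiv ℝ φ x v • F x = - ∫ x, φ x • G x v := by
  have hv : v = ∑ i, v i • EuclideanSpace.single i (1 : ℝ) := by
    have := (EuclideanSpace.basisFun (Fin k) ℝ).sum_repr v
    simpa using this.symm
  obtain ⟨C, hC⟩ := hφc.exists_bound_of_continuous hφ.continuous
  have hi1 : ∀ i : Fin k,
      Integrable fun x => fderiv ℝ φ x (EuclideanSpace.single i (1 : ℝ)) • F x := by
    intro i
    have hcont : Continuous fun x => fderiv ℝ φ x (EuclideanSpace.single i (1 : ℝ)) :=
      (hφ.continuous_fderiv (by simp)).clm_apply continuous_const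
    obtain ⟨C', hC'⟩ := (hφc.fderiv_apply ℝ _).exists_bound_of_continuous hcont
    exact integrable_bounded_smul hcont.aestronglyMeasurable hC' hFi
  have hi2 : ∀ w, Integrable fun x => φ x • G x w := fun w =>
    integrable_bounded_smul hφ.continuous.aestronglyMeasurable hC
      (hGi.apply_continuousLinearMap w)
  have h1 : ∀ x, fderiv ℝ φ x v • F x =
      ∑ i, v i • (fderiv ℝ φ x (EuclideanSpace.single i (1 : ℝ)) • F x) := by
    intro x
    conv_lhs => rw [hv]
    rw [map_sum, Finset.sum_smul]
    simp only [map_smul, smul_assoc]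
  have h2 : ∀ x, φ x • G x v =
      ∑ i, v i • (φ x • G x (EuclideanSpace.single i (1 : ℝ))) := by
    intro x
    conv_lhs => rw [hv]
    rw [map_sum, Finset.smul_sum]
    simp only [map_smul]
    exact Finset.sum_congr rfl fun i _ => smul_comm _ _ _
  simp only [h1, h2]
  rw [integral_finsetSum _ fun i _ => (hi1 i).fun_smul (v i),
    integral_finsetSum _ fun i _ => (hi2 _).fun_smul (v i), ← Finset.sum_neg_distrib]
  refine Finset.sum_congr rfl fun i _ => ?_
  rw [integral_smul, integral_smul, hweak φ hφ hφc hφU i, smul_neg]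

lemma integrable_comp_add_smul {V : Type*} [NormedAddCommGroup V]
    {G : EuclideanSpace ℝ (Fin k) → V} (hG : StronglyMeasurable G) (hGi : Integrable G)
    (v : EuclideanSpace ℝ (Fin k)) :
    Integrable (fun p : EuclideanSpace ℝ (Fin k) × ℝ => G (p.1 + p.2 • v))
      (volume.prod (volume.restrict (Ioc (0 : ℝ) 1))) := by
  have hm : StronglyMeasurable fun p : EuclideanSpace ℝ (Fin k) × ℝ => G (p.1 + p.2 • v) :=
    hG.comp_measurable (by fun_prop)
  rw [integrable_prod_iff' hm.aestronglyMeasurable]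
  refine ⟨ae_of_all _ fun s => hGi.comp_add_right (s • v), ?_⟩
  have : (fun s : ℝ => ∫ x, ‖G (x + s • v)‖) = fun _ => ∫ x, ‖G x‖ := by
    funext s
    exact integral_add_right_eq_self (fun x => ‖G x‖) (s • v)
  rw [this]
  exact integrable_const _

/-- A function with an integrable weak derivative satisfies the fundamental theorem of calculus
on almost every translate of a given segment. -/
lemma ae_eq_add_integral_of_weak (hFi : Integrable F)
    (hG : StronglyMeasurable G) (hGi : Integrable G)
    {c : EuclideanSpace ℝ (Fin k)} {R : ℝ}
    (hweak : ∀ φ : EuclideanSpace ℝ (Fin k) → ℝ, ContDiff ℝ (⊤ : ℕ∞) φ → HasCompactSupport φ →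
      tsupport φ ⊆ ball c (2 * R) → ∀ i : Fin k,
      ∫ x, fderiv ℝ φ x (EuclideanSpace.single i (1 : ℝ)) • F x =
        - ∫ x, φ x • G x (EuclideanSpace.single i (1 : ℝ)))
    {v : EuclideanSpace ℝ (Fin k)} (hv : ‖v‖ < R) :
    ∀ᵐ a, a ∈ ball c R → F (a + v) = F a + ∫ s in (0 : ℝ)..1, G (a + s • v) v := by
  set ν : Measure ℝ := volume.restrict (Ioc (0 : ℝ) 1) with hν
  have hGp := integrable_comp_add_smul hG hGi v
  have hGv : Integrable (fun p : EuclideanSpace ℝ (Fin k) × ℝ => G (p.1 + p.2 • v) v)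
      (volume.prod ν) := hGp.apply_continuousLinearMap v
  have hI : Integrable fun a => ∫ s, G (a + s • v) v ∂ν := hGv.integral_prod_left
  have hFv : Integrable fun a => F (a + v) := hFi.comp_add_right v
  have key : ∀ᵐ a, a ∈ ball c R → F (a + v) - F a - ∫ s, G (a + s • v) v ∂ν = 0 := by
    refine isOpen_ball.ae_eq_zero_of_integral_contDiff_smul_eq_zero
      (((hFv.sub hFi).sub hI).locallyIntegrable.locallyIntegrableOn _) ?_
    intro φ hφ hφc hφU
    obtain ⟨C, hC⟩ := hφc.exists_bound_of_continuous hφ.continuous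
    have hcont : Continuous fun x => fderiv ℝ φ x v :=
      (hφ.continuous_fderiv (by simp)).clm_apply continuous_const
    obtain ⟨C', hC'⟩ := (hφc.fderiv_apply ℝ v).exists_bound_of_continuous hcont
    have htrans : ∀ s ∈ Ioc (0 : ℝ) 1, ∫ x, fderiv ℝ φ (x - s • v) v • F x =
        - ∫ x, φ x • G (x + s • v) v := by
      intro s hs
      have h1 := integral_fderiv_apply_smul hFi hGi hweak (φ := fun x => φ (x - s • v))
        (hφ.comp (contDiff_id.sub contDiff_const))
        (hφc.comp_homeomorph (Homeomorph.subRight (s • v))) ?_ v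
      · have h2 : ∀ x, fderiv ℝ (fun x => φ (x - s • v)) x = fderiv ℝ φ (x - s • v) :=
          fun x => fderiv_comp_sub (s • v)
        simp only [h2] at h1
        rw [h1, ← integral_add_right_eq_self (fun x => φ (x - s • v) • G x v) (s • v)]
        simp only [add_sub_cancel_right]
      · intro x hx
        have h3 : x - s • v ∈ tsupport φ := by
          have := tsupport_comp_subset_preimage φ
            (f := fun x => x - s • v) (by fun_prop) hx
          exact this
        have h4 := hφU h3
        rw [mem_ball, dist_eq_norm] at h4 ⊢
        have h5 : ‖s • v‖ ≤ ‖v‖ := by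
          rw [norm_smul, Real.norm_eq_abs, abs_of_pos hs.1]
          exact mul_le_of_le_one_left (norm_nonneg _) hs.2
        calc ‖x - c‖ = ‖(x - s • v - c) + s • v‖ := by congr 1; abel
          _ ≤ ‖x - s • v - c‖ + ‖s • v‖ := norm_add_le _ _
          _ < 2 * R := by linarith
    have hprim : ∀ x, ∫ s, fderiv ℝ φ (x - s • v) v ∂ν = φ x - φ (x - v) := by
      intro x
      have hder : ∀ s ∈ uIcc (0 : ℝ) 1, HasDerivAt (fun s : ℝ => - φ (x - s • v))
          (fderiv ℝ φ (x - s • v) v) s := by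
        intro s _
        have h1 : HasDerivAt (fun s : ℝ => x - s • v) (-v) s := by
          simpa using ((hasDerivAt_id s).smul_const v).const_sub x
        have h2 := ((hφ.differentiable (by simp)) (x - s • v)).hasFDerivAt.comp_hasDerivAt s h1
        exact h2.neg.congr_deriv (by simp)
      have := intervalIntegral.integral_eq_sub_of_hasDerivAt hder
        (Continuous.intervalIntegrable (hcont.comp (by fun_prop)) _ _)
      rw [intervalIntegral.integral_of_le zero_le_one] at this
      rw [hν, this]
      simp
      abel
    have hFub1 : Integrable (fun p : EuclideanSpace ℝ (Fin k) × ℝ =>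
        fderiv ℝ φ (p.1 - p.2 • v) v • F p.1) (volume.prod ν) := by
      refine integrable_bounded_smul (C := C') ?_ (fun p => hC' _) (hFi.comp_fst ν)
      exact (hcont.comp (by fun_prop)).aestronglyMeasurable
    have hFub2 : Integrable (fun p : EuclideanSpace ℝ (Fin k) × ℝ =>
        φ p.1 • G (p.1 + p.2 • v) v) (volume.prod ν) := by
      refine integrable_bounded_smul (C := C) ?_ (fun p => hC _) hGv
      exact (hφ.continuous.comp (by fun_prop)).aestronglyMeasurable
    have e1 : ∫ s, (∫ x, fderiv ℝ φ (x - s • v) v • F x) ∂ν =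
        ∫ x, (φ x - φ (x - v)) • F x := by
      rw [← integral_integral_swap hFub1]
      simp only [integral_smul_const, hprim]
    have e2 : ∫ s, (∫ x, φ x • G (x + s • v) v) ∂ν = ∫ x, φ x • ∫ s, G (x + s • v) v ∂ν := by
      rw [← integral_integral_swap hFub2]
      simp only [integral_smul]
    have e3 : ∫ s, (∫ x, fderiv ℝ φ (x - s • v) v • F x) ∂ν =
        - ∫ s, (∫ x, φ x • G (x + s • v) v) ∂ν := by
      rw [← integral_neg]
      exact setIntegral_congr_fun measurableSet_Ioc htrans
    have hφb : AEStronglyMeasurable φ volume := hφ.continuous.aestronglyMeasurable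
    have i1 := integrable_bounded_smul hφb hC hFi
    have i2 := integrable_bounded_smul hφb hC hFv
    have i3 := integrable_bounded_smul hφb hC hI
    have i4 : Integrable fun x => φ (x - v) • F x :=
      integrable_bounded_smul (hφ.continuous.comp (by fun_prop)).aestronglyMeasurable
        (fun x => hC _) hFi
    have e4 : ∫ x, φ (x - v) • F x = ∫ x, φ x • F (x + v) := by
      rw [← integral_add_right_eq_self (fun x => φ (x - v) • F x) v]
      simp only [add_sub_cancel_right]
    simp only [smul_sub]
    have i12 : Integrable fun x => φ x • F (x + v) - φ x • F x := i2.sub i1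
    rw [integral_sub i12 i3, integral_sub i2 i1, ← e2, ← neg_eq_iff_eq_neg.2 e3, e1]
    simp only [sub_smul]
    rw [integral_sub i1 i4, e4]
    abel
  filter_upwards [key] with a ha hac
  have := ha hac
  rw [intervalIntegral.integral_of_le zero_le_one]
  rw [sub_sub, sub_eq_zero] at this
  exact this

end WeakDerivative

/-- If `F` has weak derivative `G` and is weakly contact on `ball c (2 * R)`, then almost every
short segment issuing from almost every point of `ball c R` is good. -/
lemma ae_ae_goodSegment {n k : ℕ} {F : EuclideanSpace ℝ (Fin k) → Heis n}
    {G : EuclideanSpace ℝ (Fin k) → EuclideanSpace ℝ (Fin k) →L[ℝ] Heis n}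
    (hF : StronglyMeasurable F) (hFi : Integrable F)
    (hG : StronglyMeasurable G) (hGi : Integrable G)
    {c : EuclideanSpace ℝ (Fin k)} {R : ℝ}
    (hweak : ∀ φ : EuclideanSpace ℝ (Fin k) → ℝ, ContDiff ℝ (⊤ : ℕ∞) φ → HasCompactSupport φ →
      tsupport φ ⊆ ball c (2 * R) → ∀ i : Fin k,
      ∫ x, fderiv ℝ φ x (EuclideanSpace.single i (1 : ℝ)) • F x =
        - ∫ x, φ x • G x (EuclideanSpace.single i (1 : ℝ)))
    (hcontact : ∀ᵐ x, x ∈ ball c (2 * R) → ∀ v, G x v ∈ kerAlpha n (F x)) :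
    ∀ᵐ a, a ∈ ball c R → ∀ᵐ v, ‖v‖ < R → GoodSegment F G a v := by
  set ν : Measure ℝ := volume.restrict (Ioc (0 : ℝ) 1) with hν
  have hm : Measurable fun p : (EuclideanSpace ℝ (Fin k) × EuclideanSpace ℝ (Fin k)) × ℝ =>
      p.1.1 + p.2 • p.1.2 := by fun_prop
  have hGm := hG.comp_measurable hm
  have c1 : ∀ᵐ a, ∀ᵐ v, Integrable (fun s : ℝ => G (a + s • v)) ν := by
    rw [Measure.ae_ae_comm (p := fun a v => Integrable (fun s : ℝ => G (a + s • v)) ν)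
      (measurableSet_integrable (f := fun (p : EuclideanSpace ℝ (Fin k) × EuclideanSpace ℝ (Fin k))
        (s : ℝ) => G (p.1 + s • p.2)) hGm)]
    exact ae_of_all _ fun v => (integrable_comp_add_smul hG hGi v).prod_right_ae
  set S : Set (EuclideanSpace ℝ (Fin k) × EuclideanSpace ℝ (Fin k)) :=
    {p | p.1 ∈ ball c R → ‖p.2‖ < R →
      F (p.1 + p.2) = F p.1 + ∫ s, G (p.1 + s • p.2) p.2 ∂ν} with hS
  have hSm : MeasurableSet S := by
    have hGm' : StronglyMeasurable
        fun p : (EuclideanSpace ℝ (Fin k) × EuclideanSpace ℝ (Fin k)) × ℝ =>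
          G (p.1.1 + p.2 • p.1.2) p.1.2 := by
      have h1 : StronglyMeasurable
          fun p : (EuclideanSpace ℝ (Fin k) × EuclideanSpace ℝ (Fin k)) × ℝ => p.1.2 :=
        (measurable_snd.comp measurable_fst).stronglyMeasurable
      exact (isBoundedBilinearMap_apply (𝕜 := ℝ) (E := EuclideanSpace ℝ (Fin k))
        (F := Heis n)).continuous.comp_stronglyMeasurable (hGm.prodMk h1)
    have e1 : MeasurableSet {p : EuclideanSpace ℝ (Fin k) × EuclideanSpace ℝ (Fin k) |
        F (p.1 + p.2) = F p.1 + ∫ s, G (p.1 + s • p.2) p.2 ∂ν} := by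
      refine StronglyMeasurable.measurableSet_eq_fun (hF.comp_measurable (by fun_prop)) ?_
      exact (hF.comp_measurable measurable_fst).add hGm'.integral_prod_right
    have e2 : MeasurableSet {p : EuclideanSpace ℝ (Fin k) × EuclideanSpace ℝ (Fin k) |
        p.1 ∈ ball c R} := measurable_fst measurableSet_ball
    have e3 : MeasurableSet {p : EuclideanSpace ℝ (Fin k) × EuclideanSpace ℝ (Fin k) |
        ‖p.2‖ < R} := measurableSet_lt (by fun_prop) measurable_const
    exact e2.imp (e3.imp e1)
  have hSae : ∀ v, ∀ᵐ a, (a, v) ∈ S := by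
    intro v
    by_cases hv : ‖v‖ < R
    · filter_upwards [ae_eq_add_integral_of_weak hFi hG hGi hweak hv] with a ha h1 _
      rw [ha h1, intervalIntegral.integral_of_le zero_le_one]
    · exact ae_of_all _ fun a _ h => absurd h hv
  have c2 : ∀ᵐ a, ∀ᵐ v, (a, v) ∈ S := by
    rw [Measure.ae_ae_comm (p := fun a v => (a, v) ∈ S) hSm]
    exact ae_of_all _ hSae
  have c3 : ∀ᵐ a, ∀ᵐ v, ∀ᵐ s : ℝ, (a, s • v) ∈ S := by
    have h1 : ∀ᵐ a, ∀ᵐ q : EuclideanSpace ℝ (Fin k) × ℝ ∂(volume.prod volume),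
        (a, q.2 • q.1) ∈ S := by
      rw [Measure.ae_ae_comm (p := fun (a : EuclideanSpace ℝ (Fin k))
        (q : EuclideanSpace ℝ (Fin k) × ℝ) => (a, q.2 • q.1) ∈ S)
        ((show Measurable fun p : EuclideanSpace ℝ (Fin k) × EuclideanSpace ℝ (Fin k) × ℝ =>
          (p.1, p.2.2 • p.2.1) by fun_prop) hSm)]
      exact ae_of_all _ fun q => hSae _
    filter_upwards [h1] with a ha using Measure.ae_ae_of_ae_prod ha
  have c4 : ∀ᵐ a, ∀ᵐ v, ∀ᵐ s : ℝ, a + s • v ∈ ball c (2 * R) →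
      ∀ w, G (a + s • v) w ∈ kerAlpha n (F (a + s • v)) := by
    obtain ⟨N, hN, hNm, hN0⟩ := exists_measurable_superset_of_null (ae_iff.1 hcontact)
    have hN' : ∀ᵐ x, x ∉ N := by rw [ae_iff]; simpa using hN0
    have h1 : ∀ᵐ a, ∀ᵐ q : EuclideanSpace ℝ (Fin k) × ℝ ∂(volume.prod volume),
        a + q.2 • q.1 ∉ N := by
      rw [Measure.ae_ae_comm (p := fun (a : EuclideanSpace ℝ (Fin k))
        (q : EuclideanSpace ℝ (Fin k) × ℝ) => a + q.2 • q.1 ∉ N)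
        ((show Measurable fun p : EuclideanSpace ℝ (Fin k) × EuclideanSpace ℝ (Fin k) × ℝ =>
          p.1 + p.2.2 • p.2.1 by fun_prop) hNm.compl)]
      exact ae_of_all _ fun q =>
        (measurePreserving_add_right volume (q.2 • q.1)).quasiMeasurePreserving.ae hN'
    filter_upwards [h1] with a ha
    filter_upwards [Measure.ae_ae_of_ae_prod ha] with v hv
    filter_upwards [hv] with s hs
    by_contra h
    exact hs (hN h)
  filter_upwards [c1, c2, c3, c4] with a h1 h2 h3 h4 ha
  filter_upwards [h1, h2, h3, h4] with v h1 h2 h3 h4 hv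
  have hsv : ∀ s ∈ Ioc (0 : ℝ) 1, ‖s • v‖ < R := by
    intro s hs
    rw [norm_smul, Real.norm_eq_abs, abs_of_pos hs.1]
    exact (mul_le_of_le_one_left (norm_nonneg _) hs.2).trans_lt hv
  refine ⟨(intervalIntegrable_iff_integrableOn_Ioc_of_le zero_le_one).2 h1, ?_, ?_, ?_⟩
  · rw [intervalIntegral.integral_of_le zero_le_one]
    exact h2 ha hv
  · filter_upwards [h3] with s hs hs01
    have h5 : F (a + s • v) = F a + ∫ σ, G (a + σ • s • v) (s • v) ∂ν := hs ha (hsv s hs01)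
    rw [h5, hν, ← intervalIntegral.integral_of_le zero_le_one]
    congr 1
    have h6 := intervalIntegral.smul_integral_comp_mul_right (a := 0) (b := 1)
      (fun σ => G (a + σ • v) v) s
    rw [zero_mul, one_mul] at h6
    rw [← h6, ← intervalIntegral.integral_smul]
    simp only [map_smul, smul_smul]
  · filter_upwards [h4] with s hs hs01
    refine hs ?_ v
    rw [mem_ball, dist_eq_norm] at ha ⊢
    calc ‖a + s • v - c‖ = ‖(a - c) + s • v‖ := by congr 1; abel
      _ ≤ ‖a - c‖ + ‖s • v‖ := norm_add_le _ _
      _ < 2 * R := by linarith [hsv s hs01]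

section Oscillation

variable {k : ℕ} {V : Type*} [NormedAddCommGroup V] {G : EuclideanSpace ℝ (Fin k) → V}

/-- The mean oscillation of `G` around `G a` on the segment from `a` to `a + v`. -/
noncomputable def segmentOsc (G : EuclideanSpace ℝ (Fin k) → V) (a v : EuclideanSpace ℝ (Fin k)) : ℝ≥0∞ :=
  ∫⁻ s in Ioc (0 : ℝ) 1, ‖G (a + s • v) - G a‖ₑ

lemma measurable_segmentOsc (hG : StronglyMeasurable G) :
    Measurable fun p : EuclideanSpace ℝ (Fin k) × EuclideanSpace ℝ (Fin k) =>
      segmentOsc G p.1 p.2 := by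
  have : StronglyMeasurable
      fun p : (EuclideanSpace ℝ (Fin k) × EuclideanSpace ℝ (Fin k)) × ℝ =>
        G (p.1.1 + p.2 • p.1.2) - G p.1.1 :=
    (hG.comp_measurable (by fun_prop)).sub (hG.comp_measurable (by fun_prop))
  exact this.enorm.lintegral_prod_right

lemma measurable_segmentOsc_right (hG : StronglyMeasurable G) (a : EuclideanSpace ℝ (Fin k)) :
    Measurable (segmentOsc G a) := by
  have h := (measurable_segmentOsc hG).comp (measurable_prodMk_left (x := a))
  exact h

lemma setLIntegral_comp_add_smul {u : EuclideanSpace ℝ (Fin k) → ℝ≥0∞} (hu : Measurable u)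
    (a : EuclideanSpace ℝ (Fin k)) {s : ℝ} (hs : 0 < s) (ρ : ℝ) :
    ∫⁻ v in closedBall 0 ρ, u (a + s • v) =
      ENNReal.ofReal |(s ^ Module.finrank ℝ (EuclideanSpace ℝ (Fin k)))⁻¹| *
        ∫⁻ y in closedBall a (s * ρ), u y := by
  have h1 : ∀ v, (closedBall (0 : EuclideanSpace ℝ (Fin k)) ρ).indicator
      (fun v => u (a + s • v)) v = (closedBall a (s * ρ)).indicator u (a + s • v) := by
    intro v
    have : v ∈ closedBall (0 : EuclideanSpace ℝ (Fin k)) ρ ↔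
        a + s • v ∈ closedBall a (s * ρ) := by
      simp only [mem_closedBall, dist_zero_right, dist_self_add_left, norm_smul, Real.norm_eq_abs,
        abs_of_pos hs]
      exact (mul_le_mul_iff_right₀ hs).symm
    by_cases hv : v ∈ closedBall (0 : EuclideanSpace ℝ (Fin k)) ρ
    · rw [indicator_of_mem hv, indicator_of_mem (this.1 hv)]
    · rw [indicator_of_notMem hv, indicator_of_notMem (fun h => hv (this.2 h))]
  rw [← lintegral_indicator measurableSet_closedBall,
    ← lintegral_indicator measurableSet_closedBall]
  simp only [h1]
  set g := (closedBall a (s * ρ)).indicator u with hg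
  have hgm : Measurable g := hu.indicator measurableSet_closedBall
  rw [← lintegral_map (f := fun w => g (a + w)) (g := fun v => s • v) (by fun_prop) (by fun_prop),
    Measure.map_addHaar_smul _ hs.ne', lintegral_smul_measure, lintegral_add_left_eq_self,
    smul_eq_mul]

/-- At almost every point the oscillation over short segments is small on average. -/
lemma ae_tendsto_lintegral_segmentOsc (hG : StronglyMeasurable G) (hGi : Integrable G) :
    ∀ᵐ a, Tendsto (fun m : ℕ => (∫⁻ v in closedBall 0 ((1 / 2 : ℝ) ^ m), segmentOsc G a v) /
      volume (closedBall (0 : EuclideanSpace ℝ (Fin k)) ((1 / 2 : ℝ) ^ m))) atTop (𝓝 0) := by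
  filter_upwards [(Besicovitch.vitaliFamily
    (volume : Measure (EuclideanSpace ℝ (Fin k)))).ae_tendsto_lintegral_enorm_sub_div_of_integrable
      hGi] with a ha
  have h1 := ha.comp (Besicovitch.tendsto_filterAt volume a)
  rw [ENNReal.tendsto_nhds_zero] at h1 ⊢
  intro ε hε
  have h2 := h1 ε hε
  rw [eventually_nhdsWithin_iff, Metric.eventually_nhds_iff] at h2
  obtain ⟨ρ₀, hρ₀, h2⟩ := h2
  have h3 : ∀ᶠ m : ℕ in atTop, (1 / 2 : ℝ) ^ m < ρ₀ :=
    (tendsto_pow_atTop_nhds_zero_of_lt_one (by norm_num) (by norm_num)).eventually_lt_const hρ₀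
  filter_upwards [h3] with m hm
  set ρ := (1 / 2 : ℝ) ^ m with hρ
  have hρ0 : 0 < ρ := by positivity
  have hum : Measurable fun y => ‖G y - G a‖ₑ := (hG.sub stronglyMeasurable_const).enorm
  refine ENNReal.div_le_of_le_mul ?_
  have hswap : ∫⁻ v in closedBall (0 : EuclideanSpace ℝ (Fin k)) ρ, segmentOsc G a v =
      ∫⁻ s in Ioc (0 : ℝ) 1, ∫⁻ v in closedBall (0 : EuclideanSpace ℝ (Fin k)) ρ,
        ‖G (a + s • v) - G a‖ₑ := by
    refine lintegral_lintegral_swap (Measurable.aemeasurable ?_)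
    exact hum.comp (show Measurable fun p : EuclideanSpace ℝ (Fin k) × ℝ => a + p.2 • p.1 by
      fun_prop)
  rw [hswap]
  calc ∫⁻ s in Ioc (0 : ℝ) 1, ∫⁻ v in closedBall (0 : EuclideanSpace ℝ (Fin k)) ρ,
        ‖G (a + s • v) - G a‖ₑ
      ≤ ∫⁻ _ in Ioc (0 : ℝ) 1, ε * volume (closedBall (0 : EuclideanSpace ℝ (Fin k)) ρ) := by
        refine setLIntegral_mono measurable_const fun s hs => ?_
        have hsρ : 0 < s * ρ := mul_pos hs.1 hρ0
        have hsρ' : s * ρ < ρ₀ := (mul_le_of_le_one_left hρ0.le hs.2).trans_lt hm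
        have h4 := h2 (y := s * ρ) (by rwa [Real.dist_eq, sub_zero, abs_of_pos hsρ]) hsρ
        simp only [Function.comp_apply] at h4
        rw [ENNReal.div_le_iff (measure_closedBall_pos volume _ hsρ).ne'
          measure_closedBall_lt_top.ne] at h4
        have h5 := setLIntegral_comp_add_smul (measurable_const (a := (1 : ℝ≥0∞))) a hs.1 ρ
        simp only [lintegral_const, Measure.restrict_apply_univ, one_mul] at h5
        rw [setLIntegral_comp_add_smul hum a hs.1 ρ, h5, mul_left_comm]
        gcongr
    _ = ε * volume (closedBall (0 : EuclideanSpace ℝ (Fin k)) ρ) := by simp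

end Oscillation

section Selection

variable {n k : ℕ} {F : EuclideanSpace ℝ (Fin k) → Heis n}
  {G : EuclideanSpace ℝ (Fin k) → EuclideanSpace ℝ (Fin k) →L[ℝ] Heis n}

/-- Two points with small mean oscillation of `G` are joined by a good segment from each of them to
a common endpoint. -/
lemma exists_goodSegment_pair (hG : StronglyMeasurable G) {y z : EuclideanSpace ℝ (Fin k)}
    {ε ρ R : ℝ} {θ : ℝ≥0∞} (hε : 0 < ε) (hε1 : ε ≤ 1) (hyz : 0 < ‖y - z‖)
    (hρ : 2 * ‖y - z‖ ≤ ρ) (hρ' : ρ ≤ 4 * ‖y - z‖) (hR : 2 * ‖y - z‖ < R)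
    (hθ : 2 * θ * ENNReal.ofReal ((4 / ε) ^ k) ≤ ENNReal.ofReal ε)
    (hy : ∫⁻ v in closedBall 0 ρ, segmentOsc G y v ≤
      θ * volume (closedBall (0 : EuclideanSpace ℝ (Fin k)) ρ))
    (hz : ∫⁻ v in closedBall 0 ρ, segmentOsc G z v ≤
      θ * volume (closedBall (0 : EuclideanSpace ℝ (Fin k)) ρ))
    (hgy : ∀ᵐ v, ‖v‖ < R → GoodSegment F G y v) (hgz : ∀ᵐ v, ‖v‖ < R → GoodSegment F G z v) :
    ∃ v, ‖v‖ ≤ ε * ‖y - z‖ ∧ GoodSegment F G y v ∧ GoodSegment F G z (y - z + v) ∧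
      segmentOsc G y v ≤ ENNReal.ofReal ε ∧ segmentOsc G z (y - z + v) ≤ ENNReal.ofReal ε := by
  set r := ‖y - z‖ with hr
  set B := closedBall (0 : EuclideanSpace ℝ (Fin k)) (ε * r) with hB
  have hεr : 0 < ε * r := mul_pos hε hyz
  have hεr' : ε * r ≤ r := mul_le_of_le_one_left hyz.le hε1
  have hm : ∀ a, Measurable (segmentOsc G a) := measurable_segmentOsc_right hG
  have hgz' : ∀ᵐ v, ‖y - z + v‖ < R → GoodSegment F G z (y - z + v) :=
    (measurePreserving_add_left volume (y - z)).quasiMeasurePreserving.ae hgz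
  have hBpos : 0 < volume B := measure_closedBall_pos volume _ hεr
  have hBfin : volume B ≠ ∞ := measure_closedBall_lt_top.ne
  have hmeas : Measurable fun v => segmentOsc G y v + segmentOsc G z (y - z + v) :=
    (hm y).add ((hm z).comp (by fun_prop))
  have hnull : volume {v | ¬ ((‖v‖ < R → GoodSegment F G y v) ∧
      (‖y - z + v‖ < R → GoodSegment F G z (y - z + v)))} = 0 :=
    ae_iff.1 (hgy.and hgz')
  have hBN : volume.restrict B ≠ 0 := by
    rw [Ne, Measure.restrict_eq_zero]; exact hBpos.ne'
  have : IsFiniteMeasure (volume.restrict B) := isFiniteMeasure_restrict.2 hBfin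
  have hBc : volume.restrict B Bᶜ = 0 := by
    rw [Measure.restrict_apply measurableSet_closedBall.compl, compl_inter_self, measure_empty]
  obtain ⟨v, hvN, hv⟩ := exists_notMem_null_le_laverage hBN hmeas.aemeasurable
    (measure_union_null (Measure.restrict_le_self.absolutelyContinuous hnull) hBc)
  simp only [mem_union, mem_ofPred_eq, mem_compl_iff, not_or, not_not] at hvN
  obtain ⟨⟨h1, h2⟩, hvB⟩ := hvN
  have hvn : ‖v‖ ≤ ε * r := by simpa [hB] using hvB
  have hI1 : ∫⁻ v in B, segmentOsc G y v ≤ θ * volume (closedBall (0 : EuclideanSpace ℝ (Fin k)) ρ) :=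
    (lintegral_mono_set (closedBall_subset_closedBall (by linarith))).trans hy
  have hI2 : ∫⁻ v in B, segmentOsc G z (y - z + v) ≤
      θ * volume (closedBall (0 : EuclideanSpace ℝ (Fin k)) ρ) := by
    refine le_trans ?_ hz
    rw [← lintegral_indicator measurableSet_closedBall,
      ← lintegral_indicator measurableSet_closedBall,
      ← lintegral_add_left_eq_self ((closedBall 0 ρ).indicator (segmentOsc G z)) (y - z)]
    refine lintegral_mono fun v => ?_
    by_cases hvB : v ∈ B
    · have hmem : y - z + v ∈ closedBall (0 : EuclideanSpace ℝ (Fin k)) ρ := by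
        rw [hB, mem_closedBall_zero_iff] at hvB
        rw [mem_closedBall_zero_iff]
        linarith [norm_add_le (y - z) v]
      rw [indicator_of_mem hvB, indicator_of_mem hmem]
    · rw [indicator_of_notMem hvB]; exact zero_le
  have hvol : volume (closedBall (0 : EuclideanSpace ℝ (Fin k)) ρ) ≤
      ENNReal.ofReal ((4 / ε) ^ k) * volume B := by
    have : closedBall (0 : EuclideanSpace ℝ (Fin k)) ρ ⊆ closedBall 0 ((4 / ε) * (ε * r)) := by
      refine closedBall_subset_closedBall (hρ'.trans_eq ?_)
      field_simp
    refine (measure_mono this).trans_eq ?_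
    rw [Measure.addHaar_closedBall_mul _ _ (by positivity) hεr.le, finrank_euclideanSpace_fin]
  have hf : segmentOsc G y v + segmentOsc G z (y - z + v) ≤ ENNReal.ofReal ε := by
    refine hv.trans ?_
    rw [setLAverage_eq, lintegral_add_left (hm y)]
    refine ENNReal.div_le_of_le_mul ?_
    calc _ ≤ θ * volume (closedBall (0 : EuclideanSpace ℝ (Fin k)) ρ) +
          θ * volume (closedBall (0 : EuclideanSpace ℝ (Fin k)) ρ) := add_le_add hI1 hI2
      _ = 2 * θ * volume (closedBall (0 : EuclideanSpace ℝ (Fin k)) ρ) := by ring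
      _ ≤ 2 * θ * (ENNReal.ofReal ((4 / ε) ^ k) * volume B) := by gcongr
      _ ≤ _ := by rw [← mul_assoc]; gcongr
  refine ⟨v, hvn, h1 (by linarith), h2 ?_, le_self_add.trans hf, le_add_self.trans hf⟩
  linarith [norm_add_le (y - z) v]

lemma GoodSegment.integral_norm_sub_le {a v : EuclideanSpace ℝ (Fin k)} (h : GoodSegment F G a v)
    {ε : ℝ} (hε : 0 ≤ ε) (hosc : segmentOsc G a v ≤ ENNReal.ofReal ε) :
    ∫ s in (0 : ℝ)..1, ‖G (a + s • v) - G a‖ ≤ ε := by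
  have hi : IntervalIntegrable (fun s : ℝ => G (a + s • v) - G a) volume 0 1 :=
    h.intervalIntegrable.sub intervalIntegrable_const
  rw [intervalIntegral.integral_of_le zero_le_one,
    integral_norm_eq_lintegral_enorm hi.1.aestronglyMeasurable]
  exact ENNReal.toReal_le_of_le_ofReal hε hosc

lemma GoodSegment.pair_estimate {y z v : EuclideanSpace ℝ (Fin k)} {ε L : ℝ}
    (hε : 0 ≤ ε) (hε1 : ε ≤ 1) (hv : ‖v‖ ≤ ε * ‖y - z‖) (hy : GoodSegment F G y v)
    (hz : GoodSegment F G z (y - z + v)) (hy' : segmentOsc G y v ≤ ENNReal.ofReal ε)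
    (hz' : segmentOsc G z (y - z + v) ≤ ENNReal.ofReal ε) (hLy : ‖G y‖ ≤ L) (hLz : ‖G z‖ ≤ L) :
    ‖F y - F z - G z (y - z)‖ ≤ (2 * L + 3) * ε * ‖y - z‖ ∧
      |height n (F y) (F z)| ≤
        ‖sympJ n‖ * (10 * (2 * L + 1) + 6 * (L + 1) ^ 2) * ε * ‖y - z‖ ^ 2 := by
  have hL : 0 ≤ L := (norm_nonneg _).trans hLy
  set r := ‖y - z‖ with hr
  set c := ‖sympJ n‖ with hc
  have hr0 : 0 ≤ r := norm_nonneg _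
  have hc0 : 0 ≤ c := norm_nonneg _
  have hεr : ε * r ≤ r := mul_le_of_le_one_left hr0 hε1
  have hεr0 : 0 ≤ ε * r := mul_nonneg hε hr0
  have hv' : ‖y - z + v‖ ≤ 2 * r := by linarith [norm_add_le (y - z) v]
  have hvr : ‖v‖ ≤ r := hv.trans hεr
  have hend : z + (y - z + v) = y + v := by abel
  have iy := hy.integral_norm_sub_le hε hy'
  have iz := hz.integral_norm_sub_le hε hz'
  have ey := hy.norm_sub_le (G y) iy
  have ez := hz.norm_sub_le (G z) iz
  have Hy := hy.abs_height_le (G y) hLy iy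
  have Hz := hz.abs_height_le (G z) hLz iz
  rw [hend] at ez Hz
  set w := F (y + v) with hw
  have ey' : ‖w - F y - G y v‖ ≤ ε * r := ey.trans (by gcongr)
  have ez' : ‖w - F z - G z (y - z + v)‖ ≤ ε * (2 * r) := ez.trans (by gcongr)
  have hGy : ‖G y v‖ ≤ L * (ε * r) := (G y).le_of_opNorm_le_of_le hLy hv
  have hGz : ‖G z v‖ ≤ L * (ε * r) := (G z).le_of_opNorm_le_of_le hLz hv
  have hGz2 : ‖G z (y - z)‖ ≤ L * r := (G z).le_of_opNorm_le_of_le hLz le_rfl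
  have hlin : ‖F y - F z - G z (y - z)‖ ≤ (2 * L + 3) * ε * r := by
    have : F y - F z - G z (y - z) = (w - F z - G z (y - z + v)) - (w - F y - G y v) +
        (G z v - G y v) := by rw [map_add]; abel
    rw [this]
    calc _ ≤ ‖w - F z - G z (y - z + v)‖ + ‖w - F y - G y v‖ + (‖G z v‖ + ‖G y v‖) :=
          (norm_add_le _ _).trans (add_le_add (_root_.norm_sub_le _ _) (_root_.norm_sub_le _ _))
      _ ≤ ε * (2 * r) + ε * r + (L * (ε * r) + L * (ε * r)) := by gcongr
      _ = _ := by ring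
  refine ⟨hlin, ?_⟩
  have hwy : ‖w - F y‖ ≤ (L + 1) * (ε * r) := by
    have := norm_add_le (w - F y - G y v) (G y v)
    rw [sub_add_cancel] at this
    linarith
  have hzy : ‖F z - F y‖ ≤ (3 * L + 3) * r := by
    rw [norm_sub_rev]
    have := norm_add_le (F y - F z - G z (y - z)) (G z (y - z))
    rw [sub_add_cancel] at this
    have h3 : (2 * L + 3) * ε * r ≤ (2 * L + 3) * r := by
      rw [mul_assoc]; gcongr
    linarith
  have hKε : 2 * L * ε + ε ^ 2 ≤ (2 * L + 1) * ε := by nlinarith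
  have Hy' : |height n w (F y)| ≤ 2 * c * ((2 * L + 1) * ε) * r ^ 2 := Hy.trans (by gcongr)
  have Hz' : |height n w (F z)| ≤ 2 * c * ((2 * L + 1) * ε) * (2 * r) ^ 2 := Hz.trans (by gcongr)
  have hin : |inner ℝ (sympJ n (w - F y)) (F z - F y)| ≤
      c * ((L + 1) * (ε * r)) * ((3 * L + 3) * r) :=
    (abs_inner_sympJ_le n _ _).trans (by gcongr)
  have htri := height_triangle n (F z) w (F y)
  rw [height_comm n (F z) w] at htri
  have hsplit : height n (F y) (F z) = 2 * inner ℝ (sympJ n (w - F y)) (F z - F y) +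
      height n w (F z) - height n w (F y) := by linarith
  rw [hsplit]
  calc _ ≤ 2 * |inner ℝ (sympJ n (w - F y)) (F z - F y)| + |height n w (F z)| +
        |height n w (F y)| := by
        refine (abs_sub _ _).trans (add_le_add_left ((abs_add_le _ _).trans ?_) _)
        rw [abs_mul, abs_two]
    _ ≤ 2 * (c * ((L + 1) * (ε * r)) * ((3 * L + 3) * r)) +
        2 * c * ((2 * L + 1) * ε) * (2 * r) ^ 2 + 2 * c * ((2 * L + 1) * ε) * r ^ 2 := by gcongr
    _ = _ := by ring

/-- Uniform first-order expansion of `F` on `E` with derivative `G`, together with a quadratically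
small vertical displacement. -/
def ContactDifferentiableOn (F : EuclideanSpace ℝ (Fin k) → Heis n)
    (G : EuclideanSpace ℝ (Fin k) → EuclideanSpace ℝ (Fin k) →L[ℝ] Heis n)
    (E : Set (EuclideanSpace ℝ (Fin k))) : Prop :=
  ∀ η : ℝ, 0 < η → ∃ r₀ : ℝ, 0 < r₀ ∧ ∀ y ∈ E, ∀ z ∈ E, ‖y - z‖ < r₀ →
    ‖F y - F z - G z (y - z)‖ ≤ η * ‖y - z‖ ∧ |height n (F y) (F z)| ≤ η * ‖y - z‖ ^ 2

lemma ContactDifferentiableOn.mono {E E' : Set (EuclideanSpace ℝ (Fin k))}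
    (h : ContactDifferentiableOn F G E) (hE : E' ⊆ E) : ContactDifferentiableOn F G E' := by
  intro η hη
  obtain ⟨r₀, hr₀, H⟩ := h η hη
  exact ⟨r₀, hr₀, fun y hy z hz => H y (hE hy) z (hE hz)⟩

lemma contactDifferentiableOn_of_uniform (hG : StronglyMeasurable G)
    {E : Set (EuclideanSpace ℝ (Fin k))} {L R : ℝ} (hR : 0 < R) (hL : ∀ a ∈ E, ‖G a‖ ≤ L)
    (hgood : ∀ a ∈ E, ∀ᵐ v, ‖v‖ < R → GoodSegment F G a v)
    (hu : ∀ θ : ℝ≥0∞, θ ≠ 0 → ∃ m₀ : ℕ, ∀ m ≥ m₀, ∀ a ∈ E,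
      ∫⁻ v in closedBall 0 ((1 / 2 : ℝ) ^ m), segmentOsc G a v ≤
        θ * volume (closedBall (0 : EuclideanSpace ℝ (Fin k)) ((1 / 2 : ℝ) ^ m))) :
    ContactDifferentiableOn F G E := by
  intro η hη
  set K := |2 * L + 3| + |‖sympJ n‖ * (10 * (2 * L + 1) + 6 * (L + 1) ^ 2)| + 1 with hK
  have hK0 : 0 < K := by positivity
  set ε := min 1 (η / K) with hε
  have hε0 : 0 < ε := lt_min one_pos (div_pos hη hK0)
  have hε1 : ε ≤ 1 := min_le_left _ _
  have hεK : K * ε ≤ η := by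
    have : ε ≤ η / K := min_le_right _ _
    rwa [le_div_iff₀ hK0, mul_comm] at this
  set q : ℝ := ε / (2 * (4 / ε) ^ k) with hq
  have hq0 : 0 < q := by positivity
  obtain ⟨m₀, hm₀⟩ := hu (ENNReal.ofReal q) (by simpa using hq0)
  have hθ : 2 * ENNReal.ofReal q * ENNReal.ofReal ((4 / ε) ^ k) ≤ ENNReal.ofReal ε := by
    rw [show (2 : ℝ≥0∞) = ENNReal.ofReal 2 by simp, ← ENNReal.ofReal_mul (by norm_num),
      ← ENNReal.ofReal_mul (by positivity)]
    refine ENNReal.ofReal_le_ofReal (le_of_eq ?_)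
    rw [hq]; field_simp
  refine ⟨min ((1 / 2 : ℝ) ^ (m₀ + 2)) (min (R / 2) (1 / 2)), by positivity,
    fun y hy z hz hyz => ?_⟩
  rw [lt_min_iff, lt_min_iff] at hyz
  obtain ⟨hyz1, hyz2, hyz3⟩ := hyz
  rcases (norm_nonneg (y - z)).eq_or_lt with h0 | h0
  · have : y = z := sub_eq_zero.1 (norm_eq_zero.1 h0.symm)
    subst this
    have := height_comm n (F y) (F y)
    have h2 : height n (F y) (F y) = 0 := by linarith
    simp [h2]
  · obtain ⟨m, hm1, hm2⟩ := exists_nat_pow_near_of_lt_one (x := 2 * ‖y - z‖) (y := (1 / 2 : ℝ))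
      (by positivity) (by linarith) (by norm_num) (by norm_num)
    have hm : m₀ ≤ m := by
      by_contra! hlt
      have h1 : (1 / 2 : ℝ) ^ m₀ ≤ (1 / 2) ^ (m + 1) :=
        pow_le_pow_of_le_one (by norm_num) (by norm_num) hlt
      rw [pow_add] at hyz1
      have h2 : (0 : ℝ) < (1 / 2) ^ m₀ := by positivity
      norm_num at hyz1 h1 hm1 h2
      linarith
    obtain ⟨v, hv, g1, g2, o1, o2⟩ := exists_goodSegment_pair hG hε0 hε1 h0 hm2
      (by rw [pow_succ] at hm1; linarith) (by linarith) hθ (hm₀ m hm y hy) (hm₀ m hm z hz)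
      (hgood y hy) (hgood z hz)
    obtain ⟨h1, h2⟩ := GoodSegment.pair_estimate hε0.le hε1 hv g1 g2 o1 o2 (hL y hy) (hL z hz)
    constructor
    · refine h1.trans ?_
      gcongr
      refine le_trans ?_ hεK
      gcongr
      have := le_abs_self (2 * L + 3)
      have := abs_nonneg (‖sympJ n‖ * (10 * (2 * L + 1) + 6 * (L + 1) ^ 2))
      linarith
    · refine h2.trans ?_
      gcongr
      refine le_trans ?_ hεK
      gcongr
      have := le_abs_self (‖sympJ n‖ * (10 * (2 * L + 1) + 6 * (L + 1) ^ 2))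
      have := abs_nonneg (2 * L + 3)
      linarith

end Selection

section Isotropy

variable {n k : ℕ} {F : EuclideanSpace ℝ (Fin k) → Heis n}
  {G : EuclideanSpace ℝ (Fin k) → EuclideanSpace ℝ (Fin k) →L[ℝ] Heis n}
  {E : Set (EuclideanSpace ℝ (Fin k))}

lemma exists_mem_near_of_density_one {x : EuclideanSpace ℝ (Fin k)}
    (hx : Tendsto (fun r => volume (E ∩ closedBall x r) / volume (closedBall x r)) (𝓝[>] 0) (𝓝 1))
    (u : EuclideanSpace ℝ (Fin k)) {η : ℝ} (hη : 0 < η) :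
    ∀ᶠ r in 𝓝[>] (0 : ℝ), ∃ u', ‖u' - u‖ ≤ η ∧ x + r • u' ∈ E := by
  filter_upwards [Measure.eventually_nonempty_inter_smul_of_density_one volume E x hx
    (closedBall u η) measurableSet_closedBall (measure_closedBall_pos volume u hη).ne'] with r hr
  obtain ⟨y, hyE, hy⟩ := hr
  rw [singleton_add, mem_image] at hy
  obtain ⟨_, ⟨u', hu', rfl⟩, rfl⟩ := hy
  exact ⟨u', by simpa [dist_eq_norm] using hu', hyE⟩

lemma ContactDifferentiableOn.difference_quotient_approx (h : ContactDifferentiableOn F G E)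
    {x : EuclideanSpace ℝ (Fin k)} (hxE : x ∈ E)
    (hx : Tendsto (fun r => volume (E ∩ closedBall x r) / volume (closedBall x r)) (𝓝[>] 0) (𝓝 1))
    (u v : EuclideanSpace ℝ (Fin k)) :
    ∃ C : ℝ, ∀ η : ℝ, 0 < η → η ≤ 1 → ∃ p q : Heis n, ‖p - G x u‖ ≤ C * η ∧
      ‖q - G x v‖ ≤ C * η ∧ |inner ℝ (sympJ n p) q| ≤ C * η := by
  set M := ‖u‖ + ‖v‖ + 1 with hM
  have hM0 : 0 < M := by positivity
  refine ⟨3 * M ^ 2 + M + ‖G x‖, fun η hη hη1 => ?_⟩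
  obtain ⟨r₀, hr₀, H⟩ := h η hη
  have hpos : ∀ᶠ r in 𝓝[>] (0 : ℝ), 0 < r := self_mem_nhdsWithin
  have hsmall : ∀ᶠ r in 𝓝[>] (0 : ℝ), r < r₀ / (2 * M) :=
    nhdsWithin_le_nhds (gt_mem_nhds (by positivity))
  obtain ⟨r, hrpos, hr, ⟨u', hu', hyE⟩, ⟨v', hv', hzE⟩⟩ := (hpos.and
    (hsmall.and ((exists_mem_near_of_density_one hx u hη).and
      (exists_mem_near_of_density_one hx v hη)))).exists
  rw [lt_div_iff₀ (by positivity)] at hr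
  have hu'M : ‖u'‖ ≤ M := by
    have := norm_add_le (u' - u) u
    rw [sub_add_cancel] at this
    linarith [norm_nonneg v]
  have hv'M : ‖v'‖ ≤ M := by
    have := norm_add_le (v' - v) v
    rw [sub_add_cancel] at this
    linarith [norm_nonneg u]
  set y := x + r • u' with hy
  set z := x + r • v' with hz
  have hyx : y - x = r • u' := by rw [hy]; abel
  have hzx : z - x = r • v' := by rw [hz]; abel
  have nyx : ‖y - x‖ ≤ r * M := by
    rw [hyx, norm_smul, Real.norm_of_nonneg hrpos.le]; gcongr
  have nzx : ‖z - x‖ ≤ r * M := by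
    rw [hzx, norm_smul, Real.norm_of_nonneg hrpos.le]; gcongr
  have nzy : ‖z - y‖ ≤ 2 * (r * M) := by
    have := norm_sub_le (z - x) (y - x)
    rw [sub_sub_sub_cancel_right] at this
    linarith
  have hrM : 0 < r * M := by positivity
  obtain ⟨l1, h1⟩ := H y hyE x hxE (by nlinarith)
  obtain ⟨l2, h2⟩ := H z hzE x hxE (by nlinarith)
  obtain ⟨-, h3⟩ := H z hzE y hyE (by nlinarith)
  have quot : ∀ (w w' y : EuclideanSpace ℝ (Fin k)), y - x = r • w' → ‖w' - w‖ ≤ η →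
      ‖y - x‖ ≤ r * M → ‖F y - F x - G x (y - x)‖ ≤ η * ‖y - x‖ →
      ‖r⁻¹ • (F y - F x) - G x w‖ ≤ (3 * M ^ 2 + M + ‖G x‖) * η := by
    intro w w' y hyx hw ny l
    have e : r⁻¹ • (F y - F x) - G x w =
        r⁻¹ • (F y - F x - G x (y - x)) + G x (w' - w) := by
      rw [hyx, map_smul, smul_sub r⁻¹ (F y - F x), inv_smul_smul₀ hrpos.ne', map_sub]; abel
    rw [e]
    calc _ ≤ r⁻¹ * (η * (r * M)) + ‖G x‖ * η := by
          refine (norm_add_le _ _).trans (add_le_add ?_ ((G x).le_opNorm_of_le hw))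
          rw [norm_smul, Real.norm_of_nonneg (by positivity)]
          gcongr
          exact l.trans (by gcongr)
      _ = (M + ‖G x‖) * η := by field_simp
      _ ≤ _ := by gcongr; nlinarith
  refine ⟨r⁻¹ • (F y - F x), r⁻¹ • (F z - F x), quot u u' y hyx hu' nyx l1,
    quot v v' z hzx hv' nzx l2, ?_⟩
  have htri := height_triangle n (F z) (F y) (F x)
  rw [height_comm n (F x)] at htri
  rw [map_smul, real_inner_smul_left, real_inner_smul_right, ← mul_assoc, abs_mul,
    abs_of_nonneg (by positivity)]
  have h1' : |height n (F y) (F x)| ≤ η * (r * M) ^ 2 := h1.trans (by gcongr)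
  have h2' : |height n (F z) (F x)| ≤ η * (r * M) ^ 2 := h2.trans (by gcongr)
  have h3' : |height n (F z) (F y)| ≤ η * (2 * (r * M)) ^ 2 := h3.trans (by gcongr)
  have hin : |inner ℝ (sympJ n (F y - F x)) (F z - F x)| ≤ 3 * M ^ 2 * η * r ^ 2 := by
    have e : inner ℝ (sympJ n (F y - F x)) (F z - F x) = (height n (F z) (F y) +
        height n (F y) (F x) - height n (F z) (F x)) / 2 := by linarith
    rw [e, abs_div, abs_two, div_le_iff₀ two_pos]
    calc _ ≤ |height n (F z) (F y)| + |height n (F y) (F x)| + |height n (F z) (F x)| :=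
          (abs_sub _ _).trans (add_le_add_left (abs_add_le _ _) _)
      _ ≤ η * (2 * (r * M)) ^ 2 + η * (r * M) ^ 2 + η * (r * M) ^ 2 := by gcongr
      _ = _ := by ring
  calc _ ≤ r⁻¹ * r⁻¹ * (3 * M ^ 2 * η * r ^ 2) := by gcongr
    _ = 3 * M ^ 2 * η := by field_simp
    _ ≤ _ := by gcongr; linarith [norm_nonneg (G x)]

/-- At density points the derivative has isotropic image. -/
lemma ContactDifferentiableOn.isotropic (h : ContactDifferentiableOn F G E)
    {x : EuclideanSpace ℝ (Fin k)} (hxE : x ∈ E)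
    (hx : Tendsto (fun r => volume (E ∩ closedBall x r) / volume (closedBall x r)) (𝓝[>] 0) (𝓝 1))
    (u v : EuclideanSpace ℝ (Fin k)) : inner ℝ (sympJ n (G x u)) (G x v) = (0 : ℝ) := by
  obtain ⟨C, hC⟩ := h.difference_quotient_approx hxE hx u v
  have hpos : ∀ j : ℕ, (0 : ℝ) < 1 / ((j : ℝ) + 1) := fun j => by positivity
  have hle : ∀ j : ℕ, (1 : ℝ) / ((j : ℝ) + 1) ≤ 1 := fun j =>
    div_le_one_of_le₀ (by linarith [j.cast_nonneg (α := ℝ)]) (by positivity)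
  choose p q hp hq hpq using fun j : ℕ => hC _ (hpos j) (hle j)
  have hlim : Tendsto (fun j : ℕ => C * (1 / ((j : ℝ) + 1))) atTop (𝓝 0) := by
    simpa using tendsto_one_div_add_atTop_nhds_zero_nat.const_mul C
  have hp' : Tendsto p atTop (𝓝 (G x u)) :=
    tendsto_iff_norm_sub_tendsto_zero.2 (squeeze_zero (fun _ => norm_nonneg _) hp hlim)
  have hq' : Tendsto q atTop (𝓝 (G x v)) :=
    tendsto_iff_norm_sub_tendsto_zero.2 (squeeze_zero (fun _ => norm_nonneg _) hq hlim)
  have h1 : Tendsto (fun j => (inner ℝ (sympJ n (p j)) (q j) : ℝ)) atTop (𝓝 0) :=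
    squeeze_zero_norm hpq hlim
  have h2 : Tendsto (fun j => (inner ℝ (sympJ n (p j)) (q j) : ℝ)) atTop
      (𝓝 (inner ℝ (sympJ n (G x u)) (G x v))) :=
    (((sympJ n).continuous.tendsto _).comp hp').inner hq'
  exact tendsto_nhds_unique h2 h1

end Isotropy

section HausdorffNull

variable {n k : ℕ} {S T : Set (Heis n)}

lemma IsHausdorffNullK.mono (hT : IsHausdorffNullK n k T) (h : S ⊆ T) :
    IsHausdorffNullK n k S := fun ε hε =>
  let ⟨U, hU, hs⟩ := hT ε hε
  ⟨U, h.trans hU, hs⟩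

lemma isHausdorffNullK_of_countable_cover (hk : k ≠ 0)
    (h : ∀ ε : ℝ≥0∞, 0 < ε → ∃ (ι : Type) (_ : Countable ι) (U : ι → Set (Heis n)),
      S ⊆ ⋃ i, U i ∧ ∑' i, kDiam n (U i) ^ k < ε) : IsHausdorffNullK n k S := by
  intro ε hε
  obtain ⟨ι, _, U, hU, hs⟩ := h ε hε
  have := Encodable.ofCountable ι
  refine ⟨fun j => ⋃ b ∈ Encodable.decode₂ ι j, U b, ?_, ?_⟩
  · rwa [Encodable.iUnion_decode₂]
  · rwa [tsum_iUnion_decode₂ (fun V => kDiam n V ^ k) (by simp [kDiam, hk])]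

lemma isHausdorffNullK_iUnion (hk : k ≠ 0) {ι : Type} [Countable ι] {S : ι → Set (Heis n)}
    (h : ∀ i, IsHausdorffNullK n k (S i)) : IsHausdorffNullK n k (⋃ i, S i) := by
  refine isHausdorffNullK_of_countable_cover hk fun ε hε => ?_
  obtain ⟨δ, hδ, hδs⟩ := ENNReal.exists_pos_sum_of_countable' hε.ne' ι
  choose U hU hs using fun i => h i (δ i) (hδ i)
  refine ⟨ι × ℕ, inferInstance, fun p => U p.1 p.2, ?_, ?_⟩
  · refine iUnion_subset fun i => (hU i).trans (iUnion_subset fun j => ?_)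
    exact subset_iUnion (fun p : ι × ℕ => U p.1 p.2) (i, j)
  · rw [ENNReal.tsum_prod (f := fun i j => kDiam n (U i j) ^ k)]
    exact (ENNReal.tsum_le_tsum fun i => (hs i).le).trans_lt hδs

lemma IsHausdorffNullK.union (hk : k ≠ 0) (hS : IsHausdorffNullK n k S)
    (hT : IsHausdorffNullK n k T) : IsHausdorffNullK n k (S ∪ T) := by
  rw [union_eq_iUnion]
  exact isHausdorffNullK_iUnion hk fun b => by cases b <;> assumption

lemma isHausdorffNullK_of_finite_cover (hk : k ≠ 0)
    (h : ∀ ε : ℝ, 0 < ε → ∃ (ι : Type) (I : Finset ι) (U : ι → Set (Heis n)) (δ : ℝ),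
      S ⊆ ⋃ i ∈ I, U i ∧ 0 ≤ δ ∧ (∀ i ∈ I, ∀ p ∈ U i, ∀ q ∈ U i, dK n p q ≤ δ) ∧
        I.card * δ ^ k ≤ ε) : IsHausdorffNullK n k S := by
  refine isHausdorffNullK_of_countable_cover hk fun ε hε => ?_
  obtain ⟨ε', hε', hlt⟩ : ∃ ε' : ℝ, 0 < ε' ∧ ENNReal.ofReal ε' < ε := by
    obtain ⟨a, ha0, ha⟩ := ENNReal.lt_iff_exists_real_btwn.1 hε
    exact ⟨a, by simpa using ha.1, ha.2⟩
  obtain ⟨ι, I, U, δ, hc, hδ, hd, hcard⟩ := h ε' hε'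
  refine ⟨I, inferInstance, fun i => U i, ?_, ?_⟩
  · refine hc.trans (iUnion₂_subset fun i hi => ?_)
    exact subset_iUnion (fun i : I => U i) ⟨i, hi⟩
  · refine lt_of_le_of_lt ?_ hlt
    have hdiam : ∀ i : I, kDiam n (U i) ^ k ≤ ENNReal.ofReal (δ ^ k) := fun i => by
      rw [ENNReal.ofReal_pow hδ]
      gcongr
      exact iSup₂_le fun p hp => iSup₂_le fun q hq =>
        ENNReal.ofReal_le_ofReal (hd i i.2 p hp q hq)
    calc _ ≤ ∑' _ : I, ENNReal.ofReal (δ ^ k) := ENNReal.tsum_le_tsum hdiam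
      _ = ENNReal.ofReal (I.card * δ ^ k) := by
        rw [tsum_fintype, Finset.sum_const, Finset.card_univ, Fintype.card_coe, nsmul_eq_mul,
          ENNReal.ofReal_mul (by positivity), ENNReal.ofReal_natCast]
      _ ≤ _ := ENNReal.ofReal_le_ofReal hcard

end HausdorffNull

section Covering

variable {n k : ℕ} {F : EuclideanSpace ℝ (Fin k) → Heis n}
  {G : EuclideanSpace ℝ (Fin k) → EuclideanSpace ℝ (Fin k) →L[ℝ] Heis n}
  {E : Set (EuclideanSpace ℝ (Fin k))}

lemma EuclideanSpace.norm_le_card_mul_of_abs_le {w : EuclideanSpace ℝ (Fin k)} {δ : ℝ}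
    (hδ : 0 ≤ δ) (h : ∀ i, |w i| ≤ δ) : ‖w‖ ≤ k * δ := by
  rw [EuclideanSpace.norm_eq]
  refine Real.sqrt_le_iff.2 ⟨by positivity, ?_⟩
  have h1 : ∑ i, ‖w i‖ ^ 2 ≤ ∑ _ : Fin k, δ ^ 2 := by
    gcongr with i
    exact h i
  refine h1.trans ?_
  rw [Finset.sum_const, Finset.card_univ, Fintype.card_fin, nsmul_eq_mul, mul_pow]
  gcongr
  rcases Nat.eq_zero_or_pos k with rfl | hk
  · simp
  · have : (1 : ℝ) ≤ k := by exact_mod_cast hk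
    nlinarith

/-- A nonzero kernel vector can be normalized to have a coordinate `1` and all coordinates bounded
by `1`. -/
lemma exists_normalized_kernel_vector {W : Type*} [NormedAddCommGroup W] [NormedSpace ℝ W]
    {A : EuclideanSpace ℝ (Fin k) →L[ℝ] W} (h : ∃ u, u ≠ 0 ∧ A u = 0) :
    ∃ (u : EuclideanSpace ℝ (Fin k)) (i₀ : Fin k), u i₀ = 1 ∧ (∀ i, |u i| ≤ 1) ∧ A u = 0 := by
  obtain ⟨u, hu, hAu⟩ := h
  have hne : ∃ i, u i ≠ 0 := by
    by_contra! hcon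
    exact hu (by ext i; simpa using hcon i)
  obtain ⟨j, hj⟩ := hne
  have : Nonempty (Fin k) := ⟨j⟩
  obtain ⟨i₀, hi₀⟩ := Finite.exists_max fun i => |u i|
  have hpos : 0 < |u i₀| := (abs_pos.2 hj).trans_le (hi₀ j)
  refine ⟨(u i₀)⁻¹ • u, i₀, ?_, fun i => ?_, by rw [map_smul, hAu, smul_zero]⟩
  · simp [inv_mul_cancel₀ (abs_pos.1 hpos)]
  · rw [PiLp.smul_apply, smul_eq_mul, abs_mul, abs_inv, inv_mul_le_iff₀ hpos, mul_one]
    exact hi₀ i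

/-- Two points of a cell that is thin transversally to a kernel direction of the derivative have
close images. -/
lemma dK_le_of_mem_cell {x y y' u : EuclideanSpace ℝ (Fin k)} {i₀ : Fin k} {L η s τ : ℝ}
    (hτ : 0 ≤ τ) (hL : ‖G x‖ ≤ L) (hu : G x u = 0)
    (hw : ∀ i, |(y - y') i - (y - y') i₀ * u i| ≤ τ)
    (hη : 0 ≤ η) (hyx : ‖y - x‖ ≤ s) (hyx' : ‖y' - x‖ ≤ s) (hyy : ‖y - y'‖ ≤ s)
    (h1 : ‖F y - F x - G x (y - x)‖ ≤ η * ‖y - x‖)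
    (h2 : ‖F y' - F x - G x (y' - x)‖ ≤ η * ‖y' - x‖)
    (h3 : |height n (F y) (F y')| ≤ η * ‖y - y'‖ ^ 2)
    (hητ : η * s ≤ k * τ) (hητ2 : η * s ^ 2 ≤ (k * τ) ^ 2) :
    dK n (F y) (F y') ≤ 2 * ((L + 2) * (k * τ)) := by
  have hL0 : 0 ≤ L := (norm_nonneg _).trans hL
  have hkτ : 0 ≤ k * τ := by positivity
  have hd : ‖(y - y') - (y - y') i₀ • u‖ ≤ k * τ :=
    EuclideanSpace.norm_le_card_mul_of_abs_le hτ fun i => by simpa using hw i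
  have hA : ‖G x (y - y')‖ ≤ L * (k * τ) := by
    have : G x (y - y') = G x ((y - y') - (y - y') i₀ • u) := by
      rw [map_sub (G x) (y - y'), map_smul, hu, smul_zero, sub_zero]
    rw [this]
    exact (G x).le_of_opNorm_le_of_le hL hd
  refine dK_le_of_norm_sub_le n (by positivity) ?_ ?_
  · have e : F y - F y' = (F y - F x - G x (y - x)) - (F y' - F x - G x (y' - x)) +
        G x (y - y') := by simp only [map_sub]; abel
    rw [e]
    calc _ ≤ ‖F y - F x - G x (y - x)‖ + ‖F y' - F x - G x (y' - x)‖ + ‖G x (y - y')‖ :=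
          (norm_add_le _ _).trans (add_le_add_left (norm_sub_le _ _) _)
      _ ≤ k * τ + k * τ + L * (k * τ) := by
          gcongr
          · exact (h1.trans (by gcongr)).trans hητ
          · exact (h2.trans (by gcongr)).trans hητ
      _ = _ := by ring
  · calc _ ≤ η * s ^ 2 := h3.trans (by gcongr)
      _ ≤ (k * τ) ^ 2 := hητ2
      _ ≤ _ := by
        exact pow_le_pow_left₀ hkτ (by nlinarith) 2

/-- Integer vectors with entries in `[-N, N]` and a vanishing entry at `i₀`. -/
noncomputable def thinBox (N : ℕ) (i₀ : Fin k) : Finset (Fin k → ℤ) :=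
  Fintype.piFinset fun i => if i = i₀ then {0} else Finset.Icc (-(N : ℤ)) N

lemma card_thinBox (N : ℕ) (i₀ : Fin k) : (thinBox N i₀).card = (2 * N + 1) ^ (k - 1) := by
  rw [thinBox, Fintype.card_piFinset, ← Finset.mul_prod_erase _ _ (Finset.mem_univ i₀)]
  have h : ∀ i ∈ Finset.univ.erase i₀,
      (if i = i₀ then ({0} : Finset ℤ) else Finset.Icc (-(N : ℤ)) N).card = 2 * N + 1 := by
    intro i hi
    rw [if_neg (Finset.ne_of_mem_erase hi), Int.card_Icc]
    omega
  rw [Finset.prod_congr rfl h]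
  simp

lemma Int.floor_mem_Icc_of_abs_le {a : ℝ} {N : ℕ} (h : |a| ≤ N) :
    ⌊a⌋ ∈ Finset.Icc (-(N : ℤ)) N := by
  rw [abs_le] at h
  rw [Finset.mem_Icc]
  refine ⟨Int.le_floor.2 (by push_cast; exact h.1), ?_⟩
  exact_mod_cast (Int.floor_le a).trans h.2

lemma ContactDifferentiableOn.image_null (hk : k ≠ 0) (hE : ContactDifferentiableOn F G E)
    {B : ℕ} (hB : 1 ≤ B) (hbd : ∀ y ∈ E, ∀ i, |y i| ≤ B) {L : ℝ} (hL0 : 0 ≤ L)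
    (hL : ∀ x ∈ E, ‖G x‖ ≤ L)
    (hker : ∀ x ∈ E, ∃ u, u ≠ 0 ∧ G x u = 0) : IsHausdorffNullK n k (F '' E) := by
  refine isHausdorffNullK_of_finite_cover hk fun ε hε => ?_
  set C : ℝ := (3 * B) ^ k * 5 ^ (k - 1) * (2 * (L + 2) * k) ^ k with hC
  have hC0 : 0 ≤ C := by positivity
  obtain ⟨m, hm⟩ := exists_nat_gt (C / ε)
  have hm0 : 0 < m := by
    have : (0 : ℝ) < m := (by positivity : 0 ≤ C / ε).trans_lt hm
    exact_mod_cast this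
  have hm0' : (0 : ℝ) < m := by exact_mod_cast hm0
  have hm1 : (1 : ℝ) ≤ m := by exact_mod_cast hm0
  have hCm : C / m ≤ ε := by
    rw [div_lt_iff₀ hε] at hm
    rw [div_le_iff₀ hm0']
    linarith
  obtain ⟨r₀, hr₀, H⟩ := hE (1 / (m : ℝ) ^ 2) (by positivity)
  obtain ⟨M, hM⟩ := exists_nat_gt (k / r₀)
  have hM0' : (0 : ℝ) < M := (by positivity : 0 ≤ k / r₀).trans_lt hM
  have hM0 : 0 < M := by exact_mod_cast hM0'
  have hs : k * (1 / M : ℝ) < r₀ := by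
    rw [div_lt_iff₀ hr₀] at hM
    rw [mul_one_div, div_lt_iff₀ hM0']
    linarith
  set cell : EuclideanSpace ℝ (Fin k) → Fin k → ℤ := fun y i => ⌊M * y i⌋ with hcell
  have hcellabs : ∀ y y' : EuclideanSpace ℝ (Fin k), cell y = cell y' →
      ∀ i, |y i - y' i| ≤ 1 / M := by
    intro y y' hyy' i
    have h1 := Int.abs_sub_lt_one_of_floor_eq_floor (congrFun hyy' i)
    rw [← mul_sub, abs_mul, abs_of_pos hM0'] at h1
    rw [le_div_iff₀ hM0', mul_comm]
    exact h1.le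
  have hcelldist : ∀ y y' : EuclideanSpace ℝ (Fin k), cell y = cell y' →
      ‖y - y'‖ ≤ k * (1 / M) := fun y y' hyy' =>
    EuclideanSpace.norm_le_card_mul_of_abs_le (by positivity) (hcellabs y y' hyy')
  have : Nonempty (Fin k) := ⟨⟨0, Nat.pos_of_ne_zero hk⟩⟩
  have hchoice : ∀ c : Fin k → ℤ, ∃ (x u : EuclideanSpace ℝ (Fin k)) (i₀ : Fin k),
      (∃ y ∈ E, cell y = c) →
        x ∈ E ∧ cell x = c ∧ u i₀ = 1 ∧ (∀ i, |u i| ≤ 1) ∧ G x u = 0 := by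
    intro c
    by_cases hc : ∃ y ∈ E, cell y = c
    · obtain ⟨x, hx, hxc⟩ := hc
      obtain ⟨u, i₀, h1, h2, h3⟩ := exists_normalized_kernel_vector (hker x hx)
      exact ⟨x, u, i₀, fun _ => ⟨hx, hxc, h1, h2, h3⟩⟩
    · exact ⟨0, 0, Classical.arbitrary _, fun h => absurd h hc⟩
  choose X U I₀ hX using hchoice
  set fine : (Fin k → ℤ) → EuclideanSpace ℝ (Fin k) → Fin k → ℤ := fun c y i =>
    ⌊(m * M : ℝ) * ((y i - X c i) - (y (I₀ c) - X c (I₀ c)) * U c i)⌋ with hfine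
  refine ⟨Σ _ : Fin k → ℤ, (Fin k → ℤ),
    (Fintype.piFinset fun _ : Fin k => Finset.Icc (-((B * M : ℕ) : ℤ)) (B * M : ℕ)).sigma
      fun c => thinBox (2 * m) (I₀ c),
    fun p => F '' {y | y ∈ E ∧ cell y = p.1 ∧ fine p.1 y = p.2},
    2 * ((L + 2) * (k * (1 / (m * M)))), ?_, by positivity, ?_, ?_⟩
  · rintro _ ⟨y, hy, rfl⟩
    refine mem_iUnion₂.2 ⟨⟨cell y, fine (cell y) y⟩, ?_, mem_image_of_mem F ⟨hy, rfl, rfl⟩⟩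
    obtain ⟨hxE, hxc, hu1, hu, -⟩ := hX (cell y) ⟨y, hy, rfl⟩
    rw [Finset.mem_sigma, Fintype.mem_piFinset, thinBox, Fintype.mem_piFinset]
    refine ⟨fun i => Int.floor_mem_Icc_of_abs_le ?_, fun i => ?_⟩
    · rw [abs_mul, abs_of_pos hM0', Nat.cast_mul, mul_comm]
      gcongr
      exact hbd y hy i
    · split_ifs with hi
      · simp [hfine, hi, hu1]
      · refine Int.floor_mem_Icc_of_abs_le ?_
        have h1 := hcellabs y (X (cell y)) hxc.symm
        rw [abs_mul, abs_of_pos (by positivity)]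
        calc _ ≤ (m * M : ℝ) * (1 / M + 1 / M * 1) := by
              gcongr
              refine (abs_sub _ _).trans (add_le_add (h1 i) ?_)
              rw [abs_mul]
              gcongr
              · exact h1 _
              · exact hu i
          _ = _ := by push_cast; field_simp; norm_num
  · rintro ⟨c, b⟩ - _ ⟨y, ⟨hy, hyc, hyb⟩, rfl⟩ _ ⟨y', ⟨hy', hyc', hyb'⟩, rfl⟩
    obtain ⟨hxE, hxc, hu1, hu, hu0⟩ := hX c ⟨y, hy, hyc⟩
    have d1 := hcelldist y (X c) (hyc.trans hxc.symm)
    have d2 := hcelldist y' (X c) (hyc'.trans hxc.symm)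
    have d3 := hcelldist y y' (hyc.trans hyc'.symm)
    refine dK_le_of_mem_cell (x := X c) (u := U c) (i₀ := I₀ c) (by positivity) (hL _ hxE) hu0
      (fun i => ?_) (by positivity) d1 d2 d3 (H y hy _ hxE (d1.trans_lt hs)).1
      (H y' hy' _ hxE (d2.trans_lt hs)).1 (H y hy y' hy' (d3.trans_lt hs)).2 ?_ ?_
    · have h1 := Int.abs_sub_lt_one_of_floor_eq_floor (congrFun (hyb.trans hyb'.symm) i)
      rw [← mul_sub, abs_mul, abs_of_pos (by positivity)] at h1
      rw [le_div_iff₀ (by positivity), mul_comm]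
      refine le_trans (le_of_eq ?_) h1.le
      congr 2
      simp only [PiLp.sub_apply]
      ring
    · rw [show (1 / (m : ℝ) ^ 2) * (k * (1 / M)) = 1 / m * (k * (1 / (m * M))) by field_simp]
      refine mul_le_of_le_one_left (by positivity) ?_
      rwa [div_le_one hm0']
    · refine le_of_eq ?_
      field_simp
  · rw [Finset.card_sigma]
    simp only [card_thinBox, Finset.sum_const, Fintype.card_piFinset, Finset.prod_const,
      Finset.card_univ, Fintype.card_fin, Int.card_Icc, smul_eq_mul]
    have e1 : (((B * M : ℕ) : ℤ) + 1 - -((B * M : ℕ) : ℤ)).toNat = 2 * (B * M) + 1 := by omega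
    rw [e1]
    have hBM : (1 : ℝ) ≤ B * M := by exact_mod_cast Nat.mul_pos hB hM0
    push_cast
    calc _ ≤ (3 * (B * M) : ℝ) ^ k * (5 * m) ^ (k - 1) *
          (2 * ((L + 2) * (k * (1 / (m * M))))) ^ k := by
          gcongr <;> linarith
      _ = C / m := by
          obtain ⟨j, rfl⟩ := Nat.exists_eq_succ_of_ne_zero hk
          rw [hC]
          simp only [Nat.succ_eq_add_one, Nat.add_sub_cancel, mul_pow, div_pow, one_pow]
          field_simp
          exact (pow_succ _ _).symm
      _ ≤ ε := hCm

end Covering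

section Decomposition

variable {n k : ℕ} {F : EuclideanSpace ℝ (Fin k) → Heis n}
  {G : EuclideanSpace ℝ (Fin k) → EuclideanSpace ℝ (Fin k) →L[ℝ] Heis n}

/-- Egorov's theorem for extended nonnegative functions tending to zero. -/
lemma exists_uniformly_small_of_ae_tendsto_zero {α : Type*} [MeasurableSpace α] {μ : Measure α}
    {q : ℕ → α → ℝ≥0∞} (hq : ∀ m, Measurable (q m)) {s : Set α} (hs : MeasurableSet s)
    (hsμ : μ s ≠ ∞) (hlim : ∀ᵐ a ∂μ, Tendsto (fun m => q m a) atTop (𝓝 0)) {δ : ℝ} (hδ : 0 < δ) :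
    ∃ t ⊆ s, μ t ≤ ENNReal.ofReal δ ∧
      ∀ θ : ℝ≥0∞, θ ≠ 0 → ∃ m₀ : ℕ, ∀ m ≥ m₀, ∀ a ∈ s \ t, q m a ≤ θ := by
  have hfin : ∀ x : ℝ≥0∞, min x 1 ≠ ∞ := fun x => ((min_le_right x 1).trans_lt ENNReal.one_lt_top).ne
  obtain ⟨t, hts, -, htδ, htu⟩ := tendstoUniformlyOn_of_ae_tendsto
    (f := fun m a => (min (q m a) 1).toReal) (g := fun _ => 0)
    (fun m => ((hq m).min measurable_const).ennreal_toReal.stronglyMeasurable)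
    stronglyMeasurable_const hs hsμ (by
      filter_upwards [hlim] with a ha _
      have h1 : Tendsto (fun m => min (q m a) 1) atTop (𝓝 (min 0 1)) := ha.min tendsto_const_nhds
      have h2 := (ENNReal.tendsto_toReal (hfin 0)).comp h1
      rwa [min_eq_left zero_le_one, ENNReal.toReal_zero] at h2) hδ
  refine ⟨t, hts, htδ, fun θ hθ => ?_⟩
  have hpos : 0 < (min θ 1).toReal := ENNReal.toReal_pos (by simp [hθ]) (hfin θ)
  obtain ⟨m₀, hm₀⟩ := eventually_atTop.1 (Metric.tendstoUniformlyOn_iff.1 htu _ hpos)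
  refine ⟨m₀, fun m hm a ha => ?_⟩
  have h := hm₀ m hm a ha
  rw [dist_zero_left, Real.norm_of_nonneg ENNReal.toReal_nonneg,
    ENNReal.toReal_lt_toReal (hfin _) (hfin _)] at h
  rcases min_lt_iff.1 h with h' | h'
  · exact h'.le.trans (min_le_left _ _)
  · exact absurd h' (min_le_right _ _).not_gt

/-- The ball `ball c R` is exhausted, up to a null set, by countably many sets with null image. -/
lemma exists_ae_cover_with_null_image (hk : n < k) {c : EuclideanSpace ℝ (Fin k)} {R : ℝ}
    (hR : 0 < R) (hF : StronglyMeasurable F) (hFi : Integrable F) (hG : StronglyMeasurable G)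
    (hGi : Integrable G)
    (hweak : ∀ φ : EuclideanSpace ℝ (Fin k) → ℝ, ContDiff ℝ (⊤ : ℕ∞) φ → HasCompactSupport φ →
      tsupport φ ⊆ ball c (2 * R) → ∀ i : Fin k,
      ∫ x, fderiv ℝ φ x (EuclideanSpace.single i (1 : ℝ)) • F x =
        -∫ x, φ x • G x (EuclideanSpace.single i (1 : ℝ)))
    (hcontact : ∀ᵐ x, x ∈ ball c (2 * R) → ∀ v, G x v ∈ kerAlpha n (F x)) :
    ∃ E : ℕ × ℕ → Set (EuclideanSpace ℝ (Fin k)), (∀ p, IsHausdorffNullK n k (F '' E p)) ∧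
      volume (ball c R \ ⋃ p, E p) = 0 := by
  have hgood := ae_ae_goodSegment hF hFi hG hGi hweak hcontact
  set q : ℕ → EuclideanSpace ℝ (Fin k) → ℝ≥0∞ := fun m a =>
    (∫⁻ v in closedBall 0 ((1 / 2 : ℝ) ^ m), segmentOsc G a v) /
      volume (closedBall (0 : EuclideanSpace ℝ (Fin k)) ((1 / 2 : ℝ) ^ m)) with hq
  have hqm : ∀ m, Measurable (q m) := fun m =>
    (measurable_segmentOsc hG).lintegral_prod_right'.div_const _
  have hball : volume (ball c R) ≠ ∞ := measure_ball_lt_top.ne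
  choose t htR htδ htu using fun j : ℕ => exists_uniformly_small_of_ae_tendsto_zero hqm
    (measurableSet_ball (x := c) (ε := R)) hball (ae_tendsto_lintegral_segmentOsc hG hGi)
    (Nat.one_div_pos_of_nat (α := ℝ) (n := j))
  have hnull : volume (⋂ j, t j) = 0 := by
    refine le_antisymm (ge_of_tendsto' (x := atTop)
      (f := fun j : ℕ => ENNReal.ofReal (1 / ((j : ℝ) + 1))) ?_ fun j =>
        (measure_mono (iInter_subset t j)).trans (htδ j)) zero_le
    have := ENNReal.tendsto_ofReal (tendsto_one_div_add_atTop_nhds_zero_nat (𝕜 := ℝ))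
    simpa using this
  set S : ℕ × ℕ → Set (EuclideanSpace ℝ (Fin k)) := fun p => {a | a ∈ ball c R \ t p.1 ∧
    ‖G a‖ ≤ p.2 ∧ (∀ᵐ v, ‖v‖ < R → GoodSegment F G a v) ∧ ∀ v, G a v ∈ kerAlpha n (F a)} with hS
  have hdiff : ∀ p, ContactDifferentiableOn F G (S p) := by
    intro p
    refine contactDifferentiableOn_of_uniform hG hR (L := p.2) (fun a ha => ha.2.1)
      (fun a ha => ha.2.2.1) fun θ hθ => ?_
    obtain ⟨m₀, hm₀⟩ := htu p.1 θ hθ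
    refine ⟨m₀, fun m hm a ha => ?_⟩
    have h := hm₀ m hm a ha.1
    rwa [hq, ENNReal.div_le_iff (measure_closedBall_pos volume _ (by positivity)).ne'
      measure_closedBall_lt_top.ne] at h
  refine ⟨fun p => {a | a ∈ S p ∧ Tendsto (fun r => volume (S p ∩ closedBall a r) /
    volume (closedBall a r)) (𝓝[>] 0) (𝓝 1)}, fun p => ?_, ?_⟩
  · obtain ⟨B, hB⟩ := exists_nat_ge (max 1 (‖c‖ + R))
    refine ((hdiff p).mono fun a ha => ha.1).image_null (by omega) (B := B) ?_ (fun y hy i => ?_)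
      p.2.cast_nonneg (fun x hx => hx.1.2.1) fun x hx => ?_
    · exact_mod_cast (le_max_left _ _).trans hB
    · have h1 : dist y c < R := hy.1.1.1
      have h2 : ‖y i‖ ≤ ‖y‖ := PiLp.norm_apply_le y i
      have h3 := norm_le_norm_add_norm_sub c y
      rw [← dist_eq_norm] at h3
      have h4 := (le_max_right _ _).trans hB
      rw [Real.norm_eq_abs] at h2
      rw [dist_comm] at h3
      linarith
    · exact exists_ne_zero_map_eq_zero hk (G x) (F x) hx.1.2.2.2 ((hdiff p).isotropic hx.1 hx.2)
  · have hdens : ∀ᵐ a, ∀ p, a ∈ S p → Tendsto (fun r => volume (S p ∩ closedBall a r) /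
        volume (closedBall a r)) (𝓝[>] 0) (𝓝 1) :=
      ae_all_iff.2 fun p => ae_imp_of_ae_restrict (Besicovitch.ae_tendsto_measure_inter_div _ _)
    have hmain : ∀ᵐ a, a ∈ ball c R → a ∈ ⋃ p, {a | a ∈ S p ∧ Tendsto (fun r =>
        volume (S p ∩ closedBall a r) / volume (closedBall a r)) (𝓝[>] 0) (𝓝 1)} := by
      have hnull' : ∀ᵐ a, a ∉ ⋂ j, t j := measure_eq_zero_iff_ae_notMem.1 hnull
      filter_upwards [hgood, hcontact, hdens, hnull'] with a h1 h2 h3 h4 haR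
      rw [mem_iInter, not_forall] at h4
      obtain ⟨j, hj⟩ := h4
      have haS : a ∈ S (j, ⌈‖G a‖⌉₊) := ⟨⟨haR, hj⟩, Nat.le_ceil _, h1 haR,
        h2 (ball_subset_ball (by linarith) haR)⟩
      exact mem_iUnion.2 ⟨_, haS, h3 _ haS⟩
    rw [ae_iff] at hmain
    refine measure_mono_null (fun a ha => ?_) hmain
    exact fun h => ha.2 (h ha.1)

end Decomposition

lemma integral_eq_setIntegral_of_ae_eq_on {α W : Type*} [MeasurableSpace α] {μ : Measure α}
    [NormedAddCommGroup W] [NormedSpace ℝ W] {u v : α → W} {Ω K : Set α} (hK : K ⊆ Ω)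
    (hu : ∀ x ∉ K, u x = 0) (hv : ∀ x ∉ K, v x = 0) (h : ∀ᵐ x ∂μ, x ∈ K → u x = v x) :
    ∫ x, u x ∂μ = ∫ x in Ω, v x ∂μ := by
  rw [setIntegral_eq_integral_of_forall_compl_eq_zero fun x hx => hv x fun hxK => hx (hK hxK)]
  refine integral_congr_ae ?_
  filter_upwards [h] with x hx
  by_cases hxK : x ∈ K
  · exact hx hxK
  · rw [hu x hxK, hv x hxK]

lemma exists_stronglyMeasurable_integrable_ae_eq_on {α W : Type*} [MeasurableSpace α]
    {μ : Measure α} [NormedAddCommGroup W] {f : α → W} {K : Set α} (hK : MeasurableSet K)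
    (hf : IntegrableOn f K μ) :
    ∃ F : α → W, StronglyMeasurable F ∧ Integrable F μ ∧ ∀ᵐ x ∂μ, x ∈ K → F x = f x := by
  have hmk := hf.1.ae_eq_mk
  refine ⟨K.indicator (hf.1.mk f), hf.1.stronglyMeasurable_mk.indicator hK,
    (integrable_indicator_iff hK).2 (hf.congr hmk), ?_⟩
  rw [EventuallyEq, ae_restrict_iff' hK] at hmk
  filter_upwards [hmk] with x hx hxK
  rw [indicator_of_mem hxK, hx hxK]

section Main

variable {n k : ℕ} {Ω : Set (EuclideanSpace ℝ (Fin k))} {f : EuclideanSpace ℝ (Fin k) → Heis n}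
  {Df : EuclideanSpace ℝ (Fin k) → (EuclideanSpace ℝ (Fin k) →L[ℝ] Heis n)}

lemma image_ball_null_of_weak_contact_lusin (hk : n < k)
    (hf : LocallyIntegrableOn f Ω) (hDf : LocallyIntegrableOn Df Ω) (hweak : IsWeakFDerivOn Ω f Df)
    (hcontact : ∀ᵐ x, x ∈ Ω → ∀ v, Df x v ∈ kerAlpha n (f x))
    (hLusin : ∀ Z : Set (EuclideanSpace ℝ (Fin k)), Z ⊆ Ω → volume Z = 0 →
      IsHausdorffNullK n k (f '' Z)) {c : EuclideanSpace ℝ (Fin k)} {R : ℝ} (hR : 0 < R)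
    (hΩ : closedBall c (2 * R) ⊆ Ω) : IsHausdorffNullK n k (f '' ball c R) := by
  have hk0 : k ≠ 0 := by omega
  have hcomp : IsCompact (closedBall c (2 * R)) := isCompact_closedBall c (2 * R)
  obtain ⟨F, hFm, hFi, hF⟩ := exists_stronglyMeasurable_integrable_ae_eq_on
    measurableSet_closedBall (hf.integrableOn_compact_subset hΩ hcomp)
  obtain ⟨G, hGm, hGi, hG⟩ := exists_stronglyMeasurable_integrable_ae_eq_on
    measurableSet_closedBall (hDf.integrableOn_compact_subset hΩ hcomp)
  obtain ⟨E, hE, hnull⟩ := exists_ae_cover_with_null_image hk hR hFm hFi hGm hGi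
    (fun φ hφ hφc hφs i => by
      have hout : ∀ x ∉ closedBall c (2 * R), x ∉ tsupport φ := fun x hx hxφ =>
        hx (ball_subset_closedBall (hφs hxφ))
      have hd : ∀ x ∉ closedBall c (2 * R), fderiv ℝ φ x = 0 := fun x hx =>
        fderiv_of_notMem_tsupport (𝕜 := ℝ) (hout x hx)
      have hφ0 : ∀ x ∉ closedBall c (2 * R), φ x = 0 := fun x hx =>
        image_eq_zero_of_notMem_tsupport (hout x hx)
      have h := hweak φ hφ hφc (hφs.trans (ball_subset_closedBall.trans hΩ)) i
      rw [integral_eq_setIntegral_of_ae_eq_on hΩ (fun x hx => by simp [hd x hx])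
          (fun x hx => by simp [hd x hx])
          (hF.mono fun x hx hxK => congrArg (fderiv ℝ φ x (EuclideanSpace.single i (1 : ℝ)) • ·)
            (hx hxK)), h,
        integral_eq_setIntegral_of_ae_eq_on hΩ (fun x hx => by simp [hφ0 x hx])
          (fun x hx => by simp [hφ0 x hx])
          (hG.mono fun x hx hxK => congrArg
            (fun A : EuclideanSpace ℝ (Fin k) →L[ℝ] Heis n =>
              φ x • A (EuclideanSpace.single i (1 : ℝ))) (hx hxK))])
    (by
      filter_upwards [hF, hG, hcontact] with x h1 h2 h3 hx v
      have hxK := ball_subset_closedBall hx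
      rw [h1 hxK, h2 hxK]
      exact h3 (hΩ hxK) v)
  have hbK : ball c R ⊆ closedBall c (2 * R) :=
    (ball_subset_ball (by linarith)).trans ball_subset_closedBall
  set Z := {x | x ∈ closedBall c (2 * R) ∧ F x ≠ f x} ∪ (ball c R \ ⋃ p, E p) with hZ
  have hZ0 : volume Z = 0 := by
    refine measure_union_null (measure_mono_null (fun x hx => ?_) (ae_iff.1 hF)) hnull
    exact fun h => hx.2 (h hx.1)
  have hZΩ : Z ⊆ Ω := union_subset (fun x hx => hΩ hx.1) fun x hx => hΩ (hbK hx.1)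
  refine ((isHausdorffNullK_iUnion hk0 hE).union hk0 (hLusin Z hZΩ hZ0)).mono ?_
  rintro _ ⟨x, hx, rfl⟩
  by_cases hxZ : x ∈ Z
  · exact Or.inr (mem_image_of_mem f hxZ)
  · have h1 : F x = f x := by
      by_contra h
      exact hxZ (Or.inl ⟨hbK hx, h⟩)
    have h2 : x ∈ ⋃ p, E p := by
      by_contra h
      exact hxZ (Or.inr ⟨hx, h⟩)
    obtain ⟨p, hp⟩ := mem_iUnion.1 h2
    exact Or.inl (mem_iUnion.2 ⟨p, x, hp, h1⟩)

end Main

/-- If `k > n ≥ 1`, `Ω ⊆ ℝ^k` is open, `f ∈ W^{1,1}_loc(Ω; ℝ^{2n+1})`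
satisfies the weak contact equation and the Lusin condition (Lebesgue-null sets are
mapped to `ℋ^k_{d_K}`-null sets), then `f(Ω)` is `ℋ^k_{d_K}`-null. -/
theorem image_null_of_weak_contact_lusin (n k : ℕ) (hn : 0 < n) (hk : n < k)
    (Ω : Set (EuclideanSpace ℝ (Fin k))) (hΩ : IsOpen Ω)
    (f : EuclideanSpace ℝ (Fin k) → Heis n)
    (Df : EuclideanSpace ℝ (Fin k) → (EuclideanSpace ℝ (Fin k) →L[ℝ] Heis n))
    (hf : LocallyIntegrableOn f Ω)
    (hDf : LocallyIntegrableOn Df Ω)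
    (hweak : IsWeakFDerivOn Ω f Df)
    (hcontact : ∀ᵐ x, x ∈ Ω → ∀ v, Df x v ∈ kerAlpha n (f x))
    (hLusin : ∀ Z : Set (EuclideanSpace ℝ (Fin k)), Z ⊆ Ω → volume Z = 0 →
      IsHausdorffNullK n k (f '' Z)) :
    IsHausdorffNullK n k (f '' Ω) := by
  have hrad : ∀ c : EuclideanSpace ℝ (Fin k), ∃ R : ℝ, c ∈ Ω →
      0 < R ∧ closedBall c (2 * R) ⊆ Ω := by
    intro c
    by_cases hc : c ∈ Ω
    · obtain ⟨r, hr, hsub⟩ := nhds_basis_closedBall.mem_iff.1 (hΩ.mem_nhds hc)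
      exact ⟨r / 2, fun _ => ⟨half_pos hr, by rwa [mul_div_cancel₀ r two_ne_zero]⟩⟩
    · exact ⟨0, fun h => absurd h hc⟩
  choose R hR using hrad
  obtain ⟨t, htΩ, htc, hcov⟩ := TopologicalSpace.countable_cover_nhdsWithin (s := Ω)
    (f := fun c => ball c (R c)) fun c hc => mem_nhdsWithin_of_mem_nhds
      (ball_mem_nhds c (hR c hc).1)
  have := htc.to_subtype
  refine (isHausdorffNullK_iUnion (by omega) (S := fun c : t => f '' ball c (R c)) fun c =>
    image_ball_null_of_weak_contact_lusin hk hf hDf hweak hcontact hLusin (hR c (htΩ c.2)).1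
      (hR c (htΩ c.2)).2).mono ?_
  rw [← image_iUnion]
  refine image_mono (hcov.trans (iUnion₂_subset fun c hc => ?_))
  exact subset_iUnion (fun c : t => ball (c : EuclideanSpace ℝ (Fin k)) (R c)) ⟨c, hc⟩
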